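/- arXiv:2011.07877 — 10 statements merged into one kernel-verified Lean document; each statement's English description precedes it below -/
import Mathlib

section
/- Let b > 0 be a real number and let f : ℂ → ℂ be any function satisfying the difference equation f(z + ib/2) = 2·cosh(π b z)·f(z − ib/2) for all z ∈ ℂ (this is the difference equation satisfied by the double sine function s_b). Then for every natural number m and every x ∈ ℂ one has f(x + i m b) = e^{i π b² m²/2} · e^{π b m x} · (−e^{−iπb²} e^{−2πbx} ; e^{−2iπb²})_m · f(x). -/
open Complex

/-- The `q`-Pochhammer symbol `(a;q)_m = ∏_{j=0}^{m-1} (1 - a q^j)`. -/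
noncomputable def qPoch (a q : ℂ) (m : ℕ) : ℂ := ∏ j ∈ Finset.range m, (1 - a * q ^ j)

/-! The difference equation says that translating by `i b` multiplies `f` by a factor `2 cosh`, so
`f (x + i m b)` is `f x` times a product of `2 cosh w_j`, the `w_j` in arithmetic progression.
Writing `2 cosh w = e^w (1 + e^{-2w})`, the factors `e^{w_j}` multiply to the exponential of an
arithmetic series, and the `e^{-2 w_j}` form a geometric progression, so the factors
`1 + e^{-2 w_j}` multiply to a `q`-Pochhammer symbol. -/

theorem apply_add_nsmul_eq_prod_smul {A M E : Type*} [AddMonoid A] [CommMonoid M] [MulAction M E]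
    {f : A → E} {g : A → M} {h : A} (hf : ∀ z, f (z + h) = g z • f z) (m : ℕ) (x : A) :
    f (x + m • h) = (∏ j ∈ Finset.range m, g (x + j • h)) • f x := by
  induction m with
  | zero => simp
  | succ m ih =>
    rw [succ_nsmul, ← add_assoc, hf, ih, smul_smul, Finset.prod_range_succ_comm]

theorem two_mul_cosh_eq_exp_mul (w : ℂ) : 2 * cosh w = exp w * (1 + exp (-2 * w)) := by
  rw [two_cosh, mul_add, mul_one, ← exp_add]
  ring_nf

theorem prod_exp_add_mul (w t : ℂ) (m : ℕ) :
    ∏ j ∈ Finset.range m, exp (w + j * t) = exp (m * w + m.choose 2 * t) := by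
  rw [← exp_sum, Finset.sum_add_distrib, ← Finset.sum_mul, ← Nat.cast_sum, Finset.sum_range_id,
    ← Nat.choose_two_right, Finset.sum_const, Finset.card_range, nsmul_eq_mul]

theorem prod_one_add_exp_eq_qPoch (w t : ℂ) (m : ℕ) :
    ∏ j ∈ Finset.range m, (1 + exp (w + j * t)) = qPoch (-exp w) (exp t) m := by
  refine Finset.prod_congr rfl fun j _ ↦ ?_
  rw [neg_mul, sub_neg_eq_add, exp_add, exp_nat_mul]

theorem prod_two_mul_cosh_eq_exp_mul_qPoch (w t : ℂ) (m : ℕ) :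
    ∏ j ∈ Finset.range m, 2 * cosh (w + j * t) =
      exp (m * w + m.choose 2 * t) * qPoch (-exp (-2 * w)) (exp (-2 * t)) m := by
  calc ∏ j ∈ Finset.range m, 2 * cosh (w + j * t)
    _ = ∏ j ∈ Finset.range m, exp (w + j * t) * (1 + exp (-2 * w + j * (-2 * t))) :=
        Finset.prod_congr rfl fun j _ ↦ by rw [two_mul_cosh_eq_exp_mul]; ring_nf
    _ = _ := by rw [Finset.prod_mul_distrib, prod_exp_add_mul, prod_one_add_exp_eq_qPoch]

theorem stmt0_general {E : Type*} [MulAction ℂ E] (b : ℂ) (f : ℂ → E)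
    (hf : ∀ z : ℂ, f (z + I * b / 2) = (2 * cosh (Real.pi * b * z)) • f (z - I * b / 2))
    (m : ℕ) (x : ℂ) :
    f (x + I * m * b) =
      (exp (I * Real.pi * b ^ 2 * m ^ 2 / 2) * exp (Real.pi * b * m * x) *
        qPoch (-exp (-(I * Real.pi * b ^ 2)) * exp (-(2 * Real.pi * b * x)))
          (exp (-(2 * I * Real.pi * b ^ 2))) m) • f x := by
  set w : ℂ := Real.pi * b * (x + I * b / 2)
  set t : ℂ := I * Real.pi * b ^ 2
  have shift (z : ℂ) : f (z + I * b) = (2 * cosh (Real.pi * b * (z + I * b / 2))) • f z := by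
    simpa only [add_assoc, add_halves, add_sub_cancel_right] using hf (z + I * b / 2)
  have factor (j : ℕ) : Real.pi * b * (x + j • (I * b) + I * b / 2) = w + j * t := by
    rw [nsmul_eq_mul]; ring
  have prefactor : m * w + m.choose 2 * t = t * m ^ 2 / 2 + Real.pi * b * m * x := by
    rw [Nat.cast_choose_two]; ring
  have base : -2 * w = -t + -(2 * Real.pi * b * x) := by ring
  have ratio : -2 * t = -(2 * I * Real.pi * b ^ 2) := by ring
  calc f (x + I * m * b)
    _ = f (x + m • (I * b)) := by rw [nsmul_eq_mul]; ring_nf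
    _ = (∏ j ∈ Finset.range m, 2 * cosh (w + j * t)) • f x := by
        simp only [apply_add_nsmul_eq_prod_smul shift, factor]
    _ = _ := by
        rw [prod_two_mul_cosh_eq_exp_mul_qPoch, prefactor, base, ratio, exp_add, exp_add, neg_mul]

/-- Lemma 5.1 of the paper: any function satisfying the defining difference equation of the
double sine function `s_b` satisfies
`f(x + i m b) = e^{iπb²m²/2} e^{πbmx} (−e^{−iπb²}e^{−2πbx}; e^{−2iπb²})_m f(x)`. -/
theorem stmt0 (b : ℝ) (hb : 0 < b) (f : ℂ → ℂ)
    (hf : ∀ z : ℂ, f (z + I * b / 2) = 2 * Complex.cosh (Real.pi * b * z) * f (z - I * b / 2)) :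
    ∀ (m : ℕ) (x : ℂ),
      f (x + I * m * b) =
        Complex.exp (I * Real.pi * b ^ 2 * m ^ 2 / 2) * Complex.exp (Real.pi * b * m * x) *
          qPoch (-Complex.exp (-(I * Real.pi * b ^ 2)) * Complex.exp (-(2 * Real.pi * b * x)))
            (Complex.exp (-(2 * I * Real.pi * b ^ 2))) m * f x :=
  stmt0_general b f hf
end

section
/- Let n ≥ 1 be an integer and let q, α, β, γ, z ∈ ℂ be nonzero. Assume q^j ≠ 1 for all integers 1 ≤ j ≤ n, and assume βγ ≠ q^i and αγ ≠ q^i for all integers i with 1−n ≤ i ≤ 0. Then ∑_{m=0}^{n} q^{−m} · (q^{n+1−m}, q^{1−m}/(γz), q^{1−m} z/γ ; q)_m / (q^{−m}, q^{1−m}/(βγ), q^{1−m}/(αγ) ; q)_m = ∑_{m=0}^{n} [(q^{−n};q)_m (γz;q)_m (γ z^{−1};q)_m / ((q;q)_m (βγ;q)_m (αγ;q)_m)] · (αβ q^{n})^{m}. -/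
/-!
The identity holds term by term. Reversing the order of the factors turns `(q^{1-m}/a;q)_m` into
`(a;q)_m` up to the factor `(-a)^m q^{m(m-1)/2}`, whose power of `q` does not depend on `a` and
therefore cancels in a quotient of two such symbols. Each of the three quotients on the left is of
this kind, for the pairs `(q^{-n}, q)`, `(γz, βγ)` and `(γz⁻¹, αγ)`.
-/

lemma qPoch_reflect {q a : ℂ} (hq : q ≠ 0) (ha : a ≠ 0) (m : ℕ) :
    qPoch (q ^ (1 - (m : ℤ)) / a) q m = qPoch a q m / ((-a) ^ m * q ^ m.choose 2) := by
  have reflected_factor : ∀ j ∈ Finset.range m,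
      1 - q ^ (1 - (m : ℤ)) / a * q ^ (m - 1 - j) = (1 - a * q ^ j) / (-a * q ^ j) := by
    intro j hj
    have exponent : q ^ (1 - (m : ℤ)) * q ^ (m - 1 - j) = (q ^ j)⁻¹ := by
      rw [← zpow_natCast, ← zpow_natCast, ← zpow_neg, ← zpow_add₀ hq]
      congr 1
      have := Finset.mem_range.mp hj
      omega
    have subtrahend : q ^ (1 - (m : ℤ)) / a * q ^ (m - 1 - j) = 1 / (a * q ^ j) := by
      rw [div_mul_eq_mul_div, exponent, inv_eq_one_div, div_div, mul_comm]
    rw [subtrahend, one_sub_div (mul_ne_zero ha (pow_ne_zero j hq)), ← neg_div_neg_eq, neg_sub,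
      neg_mul]
  calc qPoch (q ^ (1 - (m : ℤ)) / a) q m
      = ∏ j ∈ Finset.range m, (1 - q ^ (1 - (m : ℤ)) / a * q ^ (m - 1 - j)) :=
        (Finset.prod_range_reflect _ m).symm
    _ = ∏ j ∈ Finset.range m, (1 - a * q ^ j) / (-a * q ^ j) :=
        Finset.prod_congr rfl reflected_factor
    _ = qPoch a q m / ((-a) ^ m * q ^ m.choose 2) := by
        rw [Finset.prod_div_distrib, Finset.prod_mul_distrib, Finset.prod_const,
          Finset.card_range, Finset.prod_pow_eq_pow_sum, Finset.sum_range_id,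
          ← Nat.choose_two_right, qPoch]

lemma qPoch_reflect_div_reflect {q a b : ℂ} (hq : q ≠ 0) (ha : a ≠ 0) (hb : b ≠ 0) (m : ℕ) :
    qPoch (q ^ (1 - (m : ℤ)) / a) q m / qPoch (q ^ (1 - (m : ℤ)) / b) q m =
      qPoch a q m / qPoch b q m * (b / a) ^ m := by
  have hqm : q ^ m.choose 2 ≠ 0 := pow_ne_zero _ hq
  rw [qPoch_reflect hq ha, qPoch_reflect hq hb, div_div_div_comm,
    mul_div_mul_right _ _ hqm, ← div_pow, neg_div_neg_eq, div_eq_mul_inv, ← inv_pow, inv_div]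

/-- Case `k = 1` of Lemma 5.2 of the paper:
`Σ_{n,1} = ₃φ₂(q^{−n}, γz, γz^{−1}; βγ, αγ; q; αβq^{n})` as terminating sums. -/
theorem stmt1 (n : ℕ) (hn : 1 ≤ n) (q α β γ z : ℂ)
    (hq : q ≠ 0) (hα : α ≠ 0) (hβ : β ≠ 0) (hγ : γ ≠ 0) (hz : z ≠ 0)
    (hq1 : ∀ j : ℕ, 1 ≤ j → j ≤ n → q ^ j ≠ 1)
    (hβγ : ∀ i : ℤ, 1 - (n : ℤ) ≤ i → i ≤ 0 → β * γ ≠ q ^ i)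
    (hαγ : ∀ i : ℤ, 1 - (n : ℤ) ≤ i → i ≤ 0 → α * γ ≠ q ^ i) :
    ∑ m ∈ Finset.range (n + 1),
        q ^ (-(m : ℤ)) *
          (qPoch (q ^ ((n : ℤ) + 1 - (m : ℤ))) q m *
            qPoch (q ^ (1 - (m : ℤ)) / (γ * z)) q m *
            qPoch (q ^ (1 - (m : ℤ)) * z / γ) q m) /
          (qPoch (q ^ (-(m : ℤ))) q m * qPoch (q ^ (1 - (m : ℤ)) / (β * γ)) q m *
            qPoch (q ^ (1 - (m : ℤ)) / (α * γ)) q m)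
      = ∑ m ∈ Finset.range (n + 1),
          (qPoch (q ^ (-(n : ℤ))) q m * qPoch (γ * z) q m * qPoch (γ * z⁻¹) q m) /
            (qPoch q q m * qPoch (β * γ) q m * qPoch (α * γ) q m) * (α * β * q ^ n) ^ m := by
  refine Finset.sum_congr rfl fun m _ => ?_
  have numer_param : q ^ ((n : ℤ) + 1 - m) = q ^ (1 - (m : ℤ)) / q ^ (-(n : ℤ)) := by
    rw [← zpow_sub₀ hq]
    ring_nf
  have denom_param : q ^ (-(m : ℤ)) = q ^ (1 - (m : ℤ)) / q := by
    rw [div_eq_mul_inv, ← zpow_sub_one₀ hq]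
    ring_nf
  have numer_param_inv : q ^ (1 - (m : ℤ)) * z / γ = q ^ (1 - (m : ℤ)) / (γ * z⁻¹) := by
    field_simp
  have powers_combine : q ^ (-(m : ℤ)) * ((q / q ^ (-(n : ℤ))) ^ m * (β * γ / (γ * z)) ^ m *
      (α * γ / (γ * z⁻¹)) ^ m) = (α * β * q ^ n) ^ m := by
    rw [zpow_neg, zpow_neg, zpow_natCast, zpow_natCast, ← inv_pow, ← mul_pow, ← mul_pow, ← mul_pow]
    field_simp
  rw [← powers_combine, mul_div_assoc, mul_div_mul_comm, mul_div_mul_comm,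
    numer_param, numer_param_inv, congrArg (qPoch · q m) denom_param,
    qPoch_reflect_div_reflect hq (zpow_ne_zero _ hq) hq,
    qPoch_reflect_div_reflect hq (mul_ne_zero hγ hz) (mul_ne_zero hβ hγ),
    qPoch_reflect_div_reflect hq (mul_ne_zero hγ (inv_ne_zero hz)) (mul_ne_zero hα hγ),
    mul_div_mul_comm, mul_div_mul_comm]
  ring
end

section
/- Let n ≥ 1 be an integer and let q, α, β, γ, z ∈ ℂ be nonzero. Assume q^j ≠ 1 for all integers 1 ≤ j ≤ n, and assume βγ ≠ q^i and αγ ≠ q^i for all integers i with 1−n ≤ i ≤ 0. Then ∑_{m=0}^{n} α^{−m} β^{−m} q^{−mn} · (q^{n+1−m}, q^{1−m}/(γz), q^{1−m} z/γ ; q)_m / (q^{−m}, q^{1−m}/(βγ), q^{1−m}/(αγ) ; q)_m = ∑_{m=0}^{n} [(q^{−n};q)_m (γz;q)_m (γ z^{−1};q)_m / ((q;q)_m (βγ;q)_m (αγ;q)_m)] · q^{m}. -/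
/-!
The two sums agree term by term. Reversing the order of the factors turns `(q^{1-m}/a; q)_m` into
`(a; q)_m` up to the factor `(-1/a)^m q^{-m(m-1)/2}`, whose power of `q` does not depend on `a`,
so a quotient of two such symbols only picks up `(b/a)^m`. The three quotients in the `m`-th
summand pair `q^{-n}` with `q`, `γz` with `βγ`, and `γz⁻¹` with `αγ`.
-/

theorem qPoch_zpow_one_sub_div {a q : ℂ} (ha : a ≠ 0) (hq : q ≠ 0) (m : ℕ) :
    qPoch (q ^ (1 - (m : ℤ)) / a) q m = (-a⁻¹) ^ m * (q ^ m.choose 2)⁻¹ * qPoch a q m := by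
  have prod_powers : ∏ j ∈ Finset.range m, q ^ j = q ^ m.choose 2 := by
    rw [Finset.prod_pow_eq_pow_sum _ (fun j => j), Finset.sum_range_id, Nat.choose_two_right]
  have reversed_factor : ∀ j ∈ Finset.range m,
      1 - q ^ (1 - (m : ℤ)) / a * q ^ (m - 1 - j) = -a⁻¹ * (q ^ j)⁻¹ * (1 - a * q ^ j) := by
    intro j hj
    have hjm : j < m := Finset.mem_range.mp hj
    have exponent : q ^ (1 - (m : ℤ)) * q ^ (m - 1 - j) = (q ^ j)⁻¹ := by
      rw [← zpow_natCast q (m - 1 - j), ← zpow_add₀ hq, ← zpow_natCast q j, ← zpow_neg]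
      congr 1
      omega
    rw [div_mul_eq_mul_div, exponent]
    field_simp
    ring
  calc qPoch (q ^ (1 - (m : ℤ)) / a) q m
      = ∏ j ∈ Finset.range m, (1 - q ^ (1 - (m : ℤ)) / a * q ^ (m - 1 - j)) :=
        (Finset.prod_range_reflect _ m).symm
    _ = ∏ j ∈ Finset.range m, (-a⁻¹ * (q ^ j)⁻¹ * (1 - a * q ^ j)) :=
        Finset.prod_congr rfl reversed_factor
    _ = (-a⁻¹) ^ m * (q ^ m.choose 2)⁻¹ * qPoch a q m := by
        simp only [Finset.prod_mul_distrib, Finset.prod_const, Finset.card_range,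
          Finset.prod_inv_distrib, prod_powers, qPoch]

theorem qPoch_zpow_one_sub_div_div {a b q : ℂ} (ha : a ≠ 0) (hb : b ≠ 0) (hq : q ≠ 0) (m : ℕ) :
    qPoch (q ^ (1 - (m : ℤ)) / a) q m / qPoch (q ^ (1 - (m : ℤ)) / b) q m
      = (b / a) ^ m * (qPoch a q m / qPoch b q m) := by
  have hqm : (q ^ m.choose 2)⁻¹ ≠ 0 := inv_ne_zero (pow_ne_zero _ hq)
  have quotient_of_prefactors :
      (-a⁻¹) ^ m * (q ^ m.choose 2)⁻¹ / ((-b⁻¹) ^ m * (q ^ m.choose 2)⁻¹) = (b / a) ^ m := by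
    rw [mul_div_mul_right _ _ hqm, ← div_pow, neg_div_neg_eq, inv_div_inv]
  rw [qPoch_zpow_one_sub_div ha hq, qPoch_zpow_one_sub_div hb hq, mul_div_mul_comm,
    quotient_of_prefactors]

/-- Case `k = 2` of Lemma 5.2 of the paper:
`Σ_{n,2} = ₃φ₂(q^{−n}, γz, γz^{−1}; βγ, αγ; q; q)` as terminating sums. -/
theorem stmt2 (n : ℕ) (hn : 1 ≤ n) (q α β γ z : ℂ)
    (hq : q ≠ 0) (hα : α ≠ 0) (hβ : β ≠ 0) (hγ : γ ≠ 0) (hz : z ≠ 0)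
    (hq1 : ∀ j : ℕ, 1 ≤ j → j ≤ n → q ^ j ≠ 1)
    (hβγ : ∀ i : ℤ, 1 - (n : ℤ) ≤ i → i ≤ 0 → β * γ ≠ q ^ i)
    (hαγ : ∀ i : ℤ, 1 - (n : ℤ) ≤ i → i ≤ 0 → α * γ ≠ q ^ i) :
    ∑ m ∈ Finset.range (n + 1),
        α ^ (-(m : ℤ)) * β ^ (-(m : ℤ)) * q ^ (-((m : ℤ) * (n : ℤ))) *
          (qPoch (q ^ ((n : ℤ) + 1 - (m : ℤ))) q m *
            qPoch (q ^ (1 - (m : ℤ)) / (γ * z)) q m *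
            qPoch (q ^ (1 - (m : ℤ)) * z / γ) q m) /
          (qPoch (q ^ (-(m : ℤ))) q m * qPoch (q ^ (1 - (m : ℤ)) / (β * γ)) q m *
            qPoch (q ^ (1 - (m : ℤ)) / (α * γ)) q m)
      = ∑ m ∈ Finset.range (n + 1),
          (qPoch (q ^ (-(n : ℤ))) q m * qPoch (γ * z) q m * qPoch (γ * z⁻¹) q m) /
            (qPoch q q m * qPoch (β * γ) q m * qPoch (α * γ) q m) * q ^ m := by
  refine Finset.sum_congr rfl fun m _ => ?_
  have arg_n : q ^ ((n : ℤ) + 1 - m) = q ^ (1 - (m : ℤ)) / q ^ (-(n : ℤ)) := by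
    rw [← zpow_sub₀ hq]
    ring_nf
  have arg_q : q ^ (-(m : ℤ)) = q ^ (1 - (m : ℤ)) / q := by
    rw [sub_eq_neg_add, zpow_add_one₀ hq, mul_div_cancel_right₀ _ hq]
  have arg_z : q ^ (1 - (m : ℤ)) * z / γ = q ^ (1 - (m : ℤ)) / (γ * z⁻¹) := by
    field_simp
  have prefactor : α ^ (-(m : ℤ)) * β ^ (-(m : ℤ)) * q ^ (-((m : ℤ) * n)) *
      ((q / q ^ (-(n : ℤ))) ^ m * (β * γ / (γ * z)) ^ m * (α * γ / (γ * z⁻¹)) ^ m) = q ^ m := by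
    rw [mul_comm (m : ℤ), ← neg_mul, zpow_mul]
    simp only [zpow_neg, zpow_natCast, ← inv_pow, ← mul_pow]
    congr 1
    field_simp
  rw [arg_n, arg_q, arg_z, mul_div_assoc, mul_div_mul_comm, mul_div_mul_comm,
    qPoch_zpow_one_sub_div_div (zpow_ne_zero _ hq) hq hq,
    qPoch_zpow_one_sub_div_div (mul_ne_zero hγ hz) (mul_ne_zero hβ hγ) hq,
    qPoch_zpow_one_sub_div_div (mul_ne_zero hγ (inv_ne_zero hz)) (mul_ne_zero hα hγ) hq,
    ← prefactor]
  ring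
end

section
/- Let n ≥ 0 be an integer and let q, α, β, γ, z ∈ ℂ be nonzero. Assume q^j ≠ 1 for all integers 1 ≤ j ≤ n, and assume αβ ≠ q^{−i} and αγ ≠ q^{−i} for all integers 0 ≤ i ≤ n−1. Then ∑_{m=0}^{n} [(q^{n};q^{−1})_m (α^{−1}z;q^{−1})_m (α^{−1}z^{−1};q^{−1})_m / ((q^{−1};q^{−1})_m ((αβ)^{−1};q^{−1})_m ((αγ)^{−1};q^{−1})_m)] · q^{−m} = ∑_{m=0}^{n} [(q^{−n};q)_m (αz;q)_m (αz^{−1};q)_m / ((q;q)_m (αβ;q)_m (αγ;q)_m)] · (βγ q^{n})^{m}. Equivalently, the continuous dual q-Hahn polynomial satisfies H_n(z;α^{−1},β^{−1},γ^{−1},q^{−1}) = ₃φ₂(q^{−n}, αz, αz^{−1}; αβ, αγ; q; βγq^{n}) as terminating sums. -/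
/-!
Since `1 - x⁻¹ = (1 - x) * (-x⁻¹)`, inverting both the parameter and the base of a `q`-Pochhammer
symbol multiplies it by `(-a⁻¹)^m q^{-m(m-1)/2}`. The power of `q` and the sign do not depend on
`a`, so they cancel in a quotient of two such symbols, leaving the `m`-th power of a ratio of
parameters.
The two sums therefore agree term by term, the argument `q⁻¹` of the first becoming
`q⁻¹ · q (αβ)(αγ) / (q^{-n} (αz) (αz⁻¹)) = βγqⁿ`.
-/

section BaseInversion

variable {q a b c d e : ℂ}

lemma qPoch_inv_inv (ha : a ≠ 0) (hq : q ≠ 0) (m : ℕ) :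
    qPoch a⁻¹ q⁻¹ m = qPoch a q m * ((-a⁻¹) ^ m * q⁻¹ ^ m.choose 2) := by
  have factor (j : ℕ) : 1 - a⁻¹ * q⁻¹ ^ j = (1 - a * q ^ j) * (-a⁻¹ * q⁻¹ ^ j) := by
    rw [inv_pow]
    field_simp
    ring
  have powers : ∏ j ∈ Finset.range m, q⁻¹ ^ j = q⁻¹ ^ m.choose 2 := by
    rw [Finset.prod_pow_eq_pow_sum, Finset.sum_range_id, Nat.choose_two_right]
  simp only [qPoch, factor, Finset.prod_mul_distrib, Finset.prod_const, Finset.card_range, powers]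

lemma qPoch_inv_inv_div_qPoch_inv_inv (ha : a ≠ 0) (hb : b ≠ 0) (hq : q ≠ 0) (m : ℕ) :
    qPoch a⁻¹ q⁻¹ m / qPoch b⁻¹ q⁻¹ m = qPoch a q m / qPoch b q m * (b / a) ^ m := by
  have ratio : (-a⁻¹) ^ m * q⁻¹ ^ m.choose 2 / ((-b⁻¹) ^ m * q⁻¹ ^ m.choose 2) = (b / a) ^ m := by
    rw [mul_div_mul_right _ _ (pow_ne_zero _ (inv_ne_zero hq)), ← div_pow, neg_div_neg_eq,
      inv_div_inv]
  rw [qPoch_inv_inv ha hq, qPoch_inv_inv hb hq, mul_div_mul_comm, ratio]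

lemma threePhiTwo_term_inv_inv (ha : a ≠ 0) (hb : b ≠ 0) (hc : c ≠ 0) (hd : d ≠ 0) (he : e ≠ 0)
    (hq : q ≠ 0) (x : ℂ) (m : ℕ) :
    qPoch a⁻¹ q⁻¹ m * qPoch b⁻¹ q⁻¹ m * qPoch c⁻¹ q⁻¹ m /
        (qPoch q⁻¹ q⁻¹ m * qPoch d⁻¹ q⁻¹ m * qPoch e⁻¹ q⁻¹ m) * x ^ m =
      qPoch a q m * qPoch b q m * qPoch c q m / (qPoch q q m * qPoch d q m * qPoch e q m) *
        (q * d * e / (a * b * c) * x) ^ m := by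
  simp only [mul_div_mul_comm, qPoch_inv_inv_div_qPoch_inv_inv ha hq hq,
    qPoch_inv_inv_div_qPoch_inv_inv hb hd hq, qPoch_inv_inv_div_qPoch_inv_inv hc he hq, mul_pow]
  ring

end BaseInversion

/-- Base-inversion identity from the proof of Theorem 5.3 of the paper:
`H_n(z;α^{−1},β^{−1},γ^{−1},q^{−1}) = ₃φ₂(q^{−n}, αz, αz^{−1}; αβ, αγ; q; βγq^{n})`
as terminating sums. -/
theorem stmt5 (n : ℕ) (q α β γ z : ℂ)
    (hq : q ≠ 0) (hα : α ≠ 0) (hβ : β ≠ 0) (hγ : γ ≠ 0) (hz : z ≠ 0)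
    (hq1 : ∀ j : ℕ, 1 ≤ j → j ≤ n → q ^ j ≠ 1)
    (hαβ : ∀ i : ℕ, i < n → α * β ≠ q ^ (-(i : ℤ)))
    (hαγ : ∀ i : ℕ, i < n → α * γ ≠ q ^ (-(i : ℤ))) :
    ∑ m ∈ Finset.range (n + 1),
        (qPoch (q ^ n) q⁻¹ m * qPoch (α⁻¹ * z) q⁻¹ m * qPoch (α⁻¹ * z⁻¹) q⁻¹ m) /
          (qPoch q⁻¹ q⁻¹ m * qPoch ((α * β)⁻¹) q⁻¹ m * qPoch ((α * γ)⁻¹) q⁻¹ m) *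
          q ^ (-(m : ℤ))
      = ∑ m ∈ Finset.range (n + 1),
          (qPoch (q ^ (-(n : ℤ))) q m * qPoch (α * z) q m * qPoch (α * z⁻¹) q m) /
            (qPoch q q m * qPoch (α * β) q m * qPoch (α * γ) q m) *
            (β * γ * q ^ n) ^ m := by
  refine Finset.sum_congr rfl fun m _ ↦ ?_
  have argument : q * (α * β) * (α * γ) / (q ^ (-(n : ℤ)) * (α * z) * (α * z⁻¹)) * q⁻¹ =
      β * γ * q ^ n := by
    rw [zpow_neg, zpow_natCast]
    field_simp
  have inversion := threePhiTwo_term_inv_inv (zpow_ne_zero (-(n : ℤ)) hq) (mul_ne_zero hα hz)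
    (mul_ne_zero hα (inv_ne_zero hz)) (mul_ne_zero hα hβ) (mul_ne_zero hα hγ) hq q⁻¹ m
  rw [argument] at inversion
  rw [← inversion, mul_right_comm (qPoch (q ^ n) q⁻¹ m)]
  simp only [mul_inv, inv_inv, zpow_neg, zpow_natCast, inv_pow]
end

section
/- Let n ≥ 0 be an integer and let q, α, β, γ, z ∈ ℂ be nonzero. Assume q^j ≠ 1 for all integers 1 ≤ j ≤ n, and assume αβ ≠ q^{−i}, αγ ≠ q^{−i} and βγ ≠ q^{−i} for all integers 0 ≤ i ≤ n−1. Then [(βγ;q)_n / (αβ;q)_n] · ∑_{m=0}^{n} [(q^{−n};q)_m (γz;q)_m (γz^{−1};q)_m / ((q;q)_m (βγ;q)_m (αγ;q)_m)] · (αβ q^{n})^{m} = ∑_{m=0}^{n} [(q^{−n};q)_m (αz;q)_m (αz^{−1};q)_m / ((q;q)_m (αβ;q)_m (αγ;q)_m)] · (βγ q^{n})^{m}. -/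
/-!
Multiplied by `(ab, ac; q)_n`, the series `₃φ₂(q⁻ⁿ, az, a/z; ab, ac; q, bc qⁿ)` becomes a polynomial
`P_n(a, b, c)` in `q`, `a`, `b`, `c` and `x = z + z⁻¹`, and the claim is that `P_n` is symmetric.
A Pascal-type identity between the terms of the series gives
`P_{n+1}(a,b,c) = (1 - ab qⁿ)(1 - ac qⁿ) P_n(a,b,c) - bc qⁿ (1 - ax + a²) P_n(aq,b,c)`.
Exchanging `a` and `b` in this recursion shows that symmetry of `P_{n+1}` follows from symmetry of
`P_n` and the contiguous relation
`(b - a)(1 - ab qⁿ) P_n(a,b,c) = b (1 - ax + a²) P_n(aq,b,c) - a (1 - bx + b²) P_n(a,bq,c)`.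
The symmetry of `P_{n+1}` in turn allows the recursion to be run in `c`, where it propagates the
contiguous relation from `n` to `n + 1`; so both are proved by a simultaneous induction.
-/

open Finset

section CommRing

variable {R : Type*} [CommRing R]

/-- The `q`-Pochhammer symbol `(a;q)_m` over a commutative ring; over `ℂ` it is `qPoch`. -/
def qPochhammer (a q : R) (m : ℕ) : R := ∏ j ∈ range m, (1 - a * q ^ j)

lemma qPochhammer_succ (a q : R) (m : ℕ) :
    qPochhammer a q (m + 1) = qPochhammer a q m * (1 - a * q ^ m) :=
  prod_range_succ _ _

lemma qPochhammer_succ' (a q : R) (m : ℕ) :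
    qPochhammer a q (m + 1) = (1 - a) * qPochhammer (a * q) q m := by
  simp only [qPochhammer, prod_range_succ', pow_zero, mul_one, pow_succ', mul_assoc]
  exact mul_comm _ _

/-- The polynomials `P_n(x; a, b, c | q)`, which up to normalization are the continuous dual
`q⁻¹`-Hahn polynomials with parameters `a⁻¹, b⁻¹, c⁻¹` in the variable `x = z + z⁻¹`. They are
defined by a recursion in `n` which shifts `a`; this makes sense over every commutative ring, and
`qPochhammer_mul_qPochhammer_mul_threePhiTwo` identifies them with a `₃φ₂` series. -/
def dualHahn (q x : R) : ℕ → R → R → R → R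
  | 0, _, _, _ => 1
  | n + 1, a, b, c => (1 - a * b * q ^ n) * (1 - a * c * q ^ n) * dualHahn q x n a b c
      - b * c * q ^ n * (1 - a * x + a ^ 2) * dualHahn q x n (a * q) b c

lemma dualHahn_succ (q x : R) (n : ℕ) (a b c : R) :
    dualHahn q x (n + 1) a b c = (1 - a * b * q ^ n) * (1 - a * c * q ^ n) * dualHahn q x n a b c
      - b * c * q ^ n * (1 - a * x + a ^ 2) * dualHahn q x n (a * q) b c :=
  rfl

lemma dualHahn_swap_right (q x : R) (n : ℕ) (a b c : R) :
    dualHahn q x n a b c = dualHahn q x n a c b := by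
  induction n generalizing a with
  | zero => rfl
  | succ n ih =>
    rw [dualHahn_succ, dualHahn_succ, ih a, ih (a * q)]
    ring

/-- The contiguous relation between `P_n` and its shifts in the first two parameters, kept as a
predicate of `n` because it is proved simultaneously with the symmetry of `P_n`. -/
def DualHahnContiguous (q x : R) (n : ℕ) : Prop :=
  ∀ a b c, (b - a) * (1 - a * b * q ^ n) * dualHahn q x n a b c =
      b * (1 - a * x + a ^ 2) * dualHahn q x n (a * q) b c
        - a * (1 - b * x + b ^ 2) * dualHahn q x n a (b * q) c

lemma dualHahn_succ_swap_left {q x : R} {n : ℕ}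
    (swap : ∀ a b c, dualHahn q x n a b c = dualHahn q x n b a c)
    (contiguous : DualHahnContiguous q x n) (a b c : R) :
    dualHahn q x (n + 1) a b c = dualHahn q x (n + 1) b a c := by
  rw [dualHahn_succ, dualHahn_succ, swap b a, swap (b * q) a]
  linear_combination c * q ^ n * contiguous a b c

lemma dualHahn_succ_right {q x : R} {n : ℕ}
    (swap : ∀ a b c, dualHahn q x n a b c = dualHahn q x n b a c)
    (swap_succ : ∀ a b c, dualHahn q x (n + 1) a b c = dualHahn q x (n + 1) b a c) (a b c : R) :
    dualHahn q x (n + 1) a b c = (1 - a * c * q ^ n) * (1 - b * c * q ^ n) * dualHahn q x n a b c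
      - a * b * q ^ n * (1 - c * x + c ^ 2) * dualHahn q x n a b (c * q) := by
  have rotate (c : R) : dualHahn q x n c a b = dualHahn q x n a b c := by
    rw [swap c a b, dualHahn_swap_right]
  rw [dualHahn_swap_right, swap_succ, dualHahn_succ, rotate, rotate]
  ring

lemma dualHahn_contiguous_succ {q x : R} {n : ℕ}
    (swap : ∀ a b c, dualHahn q x n a b c = dualHahn q x n b a c)
    (swap_succ : ∀ a b c, dualHahn q x (n + 1) a b c = dualHahn q x (n + 1) b a c)
    (contiguous : DualHahnContiguous q x n) : DualHahnContiguous q x (n + 1) := by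
  intro a b c
  have contiguous_ac : (c - a) * (1 - a * c * q ^ n) * dualHahn q x n a b c =
      c * (1 - a * x + a ^ 2) * dualHahn q x n (a * q) b c
        - a * (1 - c * x + c ^ 2) * dualHahn q x n a b (c * q) := by
    simpa only [dualHahn_swap_right q x n _ _ b] using contiguous a c b
  simp only [dualHahn_succ_right swap swap_succ, pow_succ]
  linear_combination (1 - a * c * q ^ n) * (1 - b * c * q ^ n * q) * contiguous a b c
    - (b - a) * b * q ^ n * (1 - q) * contiguous_ac
    - a * b * q ^ n * q * (1 - c * x + c ^ 2) * contiguous a b (c * q)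

theorem dualHahn_swap_left_and_contiguous (q x : R) (n : ℕ) :
    (∀ a b c, dualHahn q x n a b c = dualHahn q x n b a c) ∧ DualHahnContiguous q x n := by
  induction n with
  | zero =>
    refine ⟨fun a b c => rfl, fun a b c => ?_⟩
    simp only [dualHahn]
    ring
  | succ n ih =>
    obtain ⟨swap, contiguous⟩ := ih
    have swap_succ := dualHahn_succ_swap_left swap contiguous
    exact ⟨swap_succ, dualHahn_contiguous_succ swap swap_succ contiguous⟩

theorem dualHahn_swap_left (q x : R) (n : ℕ) (a b c : R) :
    dualHahn q x n a b c = dualHahn q x n b a c :=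
  (dualHahn_swap_left_and_contiguous q x n).1 a b c

theorem dualHahn_reverse (q x : R) (n : ℕ) (a b c : R) :
    dualHahn q x n a b c = dualHahn q x n c b a := by
  rw [dualHahn_swap_left, dualHahn_swap_right, dualHahn_swap_left]

end CommRing

section Field

variable {K : Type*} [Field K]

lemma qPochhammer_ne_zero {a q : K} {n : ℕ} (h : ∀ i : ℕ, i < n → a ≠ q ^ (-(i : ℤ))) :
    qPochhammer a q n ≠ 0 := by
  refine prod_ne_zero_iff.2 fun i hi => sub_ne_zero.2 fun e => h i (mem_range.1 hi) ?_
  rw [zpow_neg, zpow_natCast]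
  exact eq_inv_of_mul_eq_one_left e.symm

lemma qPochhammer_self_ne_zero {q : K} {n : ℕ} (h : ∀ j : ℕ, 1 ≤ j → j ≤ n → q ^ j ≠ 1) :
    qPochhammer q q n ≠ 0 :=
  prod_ne_zero_iff.2 fun i hi => sub_ne_zero.2 fun e =>
    h (i + 1) i.succ_pos (mem_range.1 hi) (pow_succ' q i ▸ e.symm)

lemma qPochhammer_inv_pow_eq_zero {q : K} (hq : q ≠ 0) (n : ℕ) :
    qPochhammer (q ^ n)⁻¹ q (n + 1) = 0 := by
  rw [qPochhammer_succ, inv_mul_cancel₀ (pow_ne_zero n hq), sub_self, mul_zero]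

lemma qPochhammer_inv_mul_pow_succ {q y : K} (hq : q ≠ 0) (hy : y ≠ 0) (m : ℕ) :
    qPochhammer (y * q)⁻¹ q (m + 1) * (y * q) ^ (m + 1) =
      qPochhammer y⁻¹ q (m + 1) * y ^ (m + 1)
        - y * (1 - q * q ^ m) * (qPochhammer y⁻¹ q m * y ^ m) := by
  have shift : (y * q)⁻¹ * q = y⁻¹ := by field_simp
  rw [qPochhammer_succ', shift, qPochhammer_succ]
  field_simp
  ring

lemma qPochhammer_ratio_succ {q : K} {m : ℕ} (hqm : 1 - q * q ^ m ≠ 0) (a₁ a₂ b₁ b₂ : K) :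
    (1 - q * q ^ m) * (qPochhammer a₁ q (m + 1) * qPochhammer a₂ q (m + 1) /
        (qPochhammer q q (m + 1) * qPochhammer b₁ q (m + 1) * qPochhammer b₂ q (m + 1))) =
      (1 - a₁) * (1 - a₂) / ((1 - b₁) * (1 - b₂)) *
        (qPochhammer (a₁ * q) q m * qPochhammer (a₂ * q) q m /
          (qPochhammer q q m * qPochhammer (b₁ * q) q m * qPochhammer (b₂ * q) q m)) := by
  rw [qPochhammer_succ q, qPochhammer_succ' a₁, qPochhammer_succ' a₂, qPochhammer_succ' b₁,
    qPochhammer_succ' b₂]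
  field_simp

/-- The `m`-th term of the series `₃φ₂(y⁻¹, a₁, a₂; b₁, b₂; q, t y)`. The argument is normalized
by `y`, which is `qⁿ` when the series terminates. -/
def threePhiTwoTerm (q y a₁ a₂ b₁ b₂ t : K) (m : ℕ) : K :=
  qPochhammer y⁻¹ q m * qPochhammer a₁ q m * qPochhammer a₂ q m /
    (qPochhammer q q m * qPochhammer b₁ q m * qPochhammer b₂ q m) * (t * y) ^ m

lemma threePhiTwoTerm_zero (q y a₁ a₂ b₁ b₂ t : K) : threePhiTwoTerm q y a₁ a₂ b₁ b₂ t 0 = 1 := by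
  simp [threePhiTwoTerm, qPochhammer]

lemma threePhiTwoTerm_succ {q y : K} (hq : q ≠ 0) (hy : y ≠ 0) {m : ℕ} (hqm : 1 - q * q ^ m ≠ 0)
    (a₁ a₂ b₁ b₂ t : K) :
    threePhiTwoTerm q (y * q) a₁ a₂ b₁ b₂ t (m + 1) = threePhiTwoTerm q y a₁ a₂ b₁ b₂ t (m + 1)
      - t * y * ((1 - a₁) * (1 - a₂) / ((1 - b₁) * (1 - b₂))) *
        threePhiTwoTerm q y (a₁ * q) (a₂ * q) (b₁ * q) (b₂ * q) t m := by
  have pascal := qPochhammer_inv_mul_pow_succ hq hy m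
  have ratio := qPochhammer_ratio_succ hqm a₁ a₂ b₁ b₂
  simp only [threePhiTwoTerm, mul_pow t]
  linear_combination qPochhammer a₁ q (m + 1) * qPochhammer a₂ q (m + 1) /
    (qPochhammer q q (m + 1) * qPochhammer b₁ q (m + 1) * qPochhammer b₂ q (m + 1)) * t ^ (m + 1) *
      pascal - y * (qPochhammer y⁻¹ q m * y ^ m) * t ^ (m + 1) * ratio

/-- The series `₃φ₂(q⁻ⁿ, a₁, a₂; b₁, b₂; q, t qⁿ)`, which terminates after the term of
index `n`. -/
def threePhiTwo (q : K) (n : ℕ) (a₁ a₂ b₁ b₂ t : K) : K :=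
  ∑ m ∈ range (n + 1), threePhiTwoTerm q (q ^ n) a₁ a₂ b₁ b₂ t m

lemma threePhiTwo_succ {q : K} (hq : q ≠ 0) {n : ℕ} (hqn : qPochhammer q q (n + 1) ≠ 0)
    (a₁ a₂ b₁ b₂ t : K) :
    threePhiTwo q (n + 1) a₁ a₂ b₁ b₂ t = threePhiTwo q n a₁ a₂ b₁ b₂ t
      - t * q ^ n * ((1 - a₁) * (1 - a₂) / ((1 - b₁) * (1 - b₂))) *
        threePhiTwo q n (a₁ * q) (a₂ * q) (b₁ * q) (b₂ * q) t := by
  have extend : threePhiTwo q n a₁ a₂ b₁ b₂ t =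
      ∑ m ∈ range (n + 2), threePhiTwoTerm q (q ^ n) a₁ a₂ b₁ b₂ t m := by
    rw [sum_range_succ _ (n + 1), threePhiTwoTerm, qPochhammer_inv_pow_eq_zero hq]
    simp only [zero_mul, zero_div, add_zero, threePhiTwo]
  rw [extend, threePhiTwo, threePhiTwo, sum_range_succ', sum_range_succ' _ (n + 1), mul_sum,
    add_sub_right_comm, ← sum_sub_distrib, threePhiTwoTerm_zero, threePhiTwoTerm_zero]
  congr 1
  refine sum_congr rfl fun m hm => ?_
  rw [pow_succ, threePhiTwoTerm_succ hq (pow_ne_zero n hq) (prod_ne_zero_iff.1 hqn m hm)]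

theorem qPochhammer_mul_qPochhammer_mul_threePhiTwo {q z : K} (hq : q ≠ 0) (hz : z ≠ 0) {n : ℕ}
    (hqn : qPochhammer q q n ≠ 0) {a b c : K} (hab : qPochhammer (a * b) q n ≠ 0)
    (hac : qPochhammer (a * c) q n ≠ 0) :
    qPochhammer (a * b) q n * qPochhammer (a * c) q n *
        threePhiTwo q n (a * z) (a * z⁻¹) (a * b) (a * c) (b * c) =
      dualHahn q (z + z⁻¹) n a b c := by
  induction n generalizing a with
  | zero => simp [threePhiTwo, threePhiTwoTerm_zero, qPochhammer, dualHahn]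
  | succ n ih =>
    have hqn' : qPochhammer q q n ≠ 0 := left_ne_zero_of_mul (qPochhammer_succ q q n ▸ hqn)
    have hab_shift := qPochhammer_succ' (a * b) q n ▸ hab
    have hac_shift := qPochhammer_succ' (a * c) q n ▸ hac
    have ih_a := ih hqn' (left_ne_zero_of_mul (qPochhammer_succ (a * b) q n ▸ hab))
      (left_ne_zero_of_mul (qPochhammer_succ (a * c) q n ▸ hac))
    have ih_aq := ih (a := a * q) hqn'
      (by simpa only [mul_right_comm] using right_ne_zero_of_mul hab_shift)
      (by simpa only [mul_right_comm] using right_ne_zero_of_mul hac_shift)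
    have hab₀ : 1 - a * b ≠ 0 := left_ne_zero_of_mul hab_shift
    have hac₀ : 1 - a * c ≠ 0 := left_ne_zero_of_mul hac_shift
    have factor : (1 - a * z) * (1 - a * z⁻¹) = 1 - a * (z + z⁻¹) + a ^ 2 := by
      linear_combination a ^ 2 * mul_inv_cancel₀ hz
    rw [dualHahn_succ, ← ih_a, ← ih_aq, threePhiTwo_succ hq hqn, mul_sub]
    simp only [mul_right_comm _ q]
    congr 1
    · rw [qPochhammer_succ, qPochhammer_succ]
      ring
    · rw [qPochhammer_succ', qPochhammer_succ', factor]
      field_simp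

theorem stmt6_general (n : ℕ) (q α β γ z : K) (hq : q ≠ 0) (hz : z ≠ 0)
    (hq1 : ∀ j : ℕ, 1 ≤ j → j ≤ n → q ^ j ≠ 1)
    (hαβ : ∀ i : ℕ, i < n → α * β ≠ q ^ (-(i : ℤ)))
    (hαγ : ∀ i : ℕ, i < n → α * γ ≠ q ^ (-(i : ℤ)))
    (hβγ : ∀ i : ℕ, i < n → β * γ ≠ q ^ (-(i : ℤ))) :
    qPochhammer (β * γ) q n / qPochhammer (α * β) q n *
        ∑ m ∈ range (n + 1),
          (qPochhammer (q ^ (-(n : ℤ))) q m * qPochhammer (γ * z) q m * qPochhammer (γ * z⁻¹) q m) /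
            (qPochhammer q q m * qPochhammer (β * γ) q m * qPochhammer (α * γ) q m) *
            (α * β * q ^ n) ^ m
      = ∑ m ∈ range (n + 1),
          (qPochhammer (q ^ (-(n : ℤ))) q m * qPochhammer (α * z) q m * qPochhammer (α * z⁻¹) q m) /
            (qPochhammer q q m * qPochhammer (α * β) q m * qPochhammer (α * γ) q m) *
            (β * γ * q ^ n) ^ m := by
  have hqn := qPochhammer_self_ne_zero hq1
  have nαβ := qPochhammer_ne_zero hαβ
  have nαγ := qPochhammer_ne_zero hαγ
  have nβγ := qPochhammer_ne_zero hβγ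
  have series_α := qPochhammer_mul_qPochhammer_mul_threePhiTwo hq hz hqn nαβ nαγ
  have series_γ := qPochhammer_mul_qPochhammer_mul_threePhiTwo hq hz hqn
    (mul_comm β γ ▸ nβγ) (mul_comm α γ ▸ nαγ)
  rw [dualHahn_reverse, ← series_α, mul_comm γ β, mul_comm γ α, mul_comm β α] at series_γ
  simp only [zpow_neg, zpow_natCast]
  change _ * threePhiTwo q n (γ * z) (γ * z⁻¹) (β * γ) (α * γ) (α * β) =
    threePhiTwo q n (α * z) (α * z⁻¹) (α * β) (α * γ) (β * γ)
  rw [div_mul_eq_mul_div, div_eq_iff nαβ]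
  apply mul_right_cancel₀ nαγ
  linear_combination series_γ

end Field

/-- Equation (5.32) in the proof of Theorem 5.3 of the paper: a transformation identity
between two terminating `₃φ₂` series. -/
theorem stmt6 (n : ℕ) (q α β γ z : ℂ)
    (hq : q ≠ 0) (hα : α ≠ 0) (hβ : β ≠ 0) (hγ : γ ≠ 0) (hz : z ≠ 0)
    (hq1 : ∀ j : ℕ, 1 ≤ j → j ≤ n → q ^ j ≠ 1)
    (hαβ : ∀ i : ℕ, i < n → α * β ≠ q ^ (-(i : ℤ)))
    (hαγ : ∀ i : ℕ, i < n → α * γ ≠ q ^ (-(i : ℤ)))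
    (hβγ : ∀ i : ℕ, i < n → β * γ ≠ q ^ (-(i : ℤ))) :
    qPoch (β * γ) q n / qPoch (α * β) q n *
        ∑ m ∈ Finset.range (n + 1),
          (qPoch (q ^ (-(n : ℤ))) q m * qPoch (γ * z) q m * qPoch (γ * z⁻¹) q m) /
            (qPoch q q m * qPoch (β * γ) q m * qPoch (α * γ) q m) *
            (α * β * q ^ n) ^ m
      = ∑ m ∈ Finset.range (n + 1),
          (qPoch (q ^ (-(n : ℤ))) q m * qPoch (α * z) q m * qPoch (α * z⁻¹) q m) /
            (qPoch q q m * qPoch (α * β) q m * qPoch (α * γ) q m) *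
            (β * γ * q ^ n) ^ m := by
  exact stmt6_general n q α β γ z hq hz hq1 hαβ hαγ hβγ
end

section
/- Let b > 0 and θ₀, θ_t, θ_*, ν ∈ ℝ, and set Q = b + b^{−1}. For j ∈ {+1, −1} define, for real Λ > 0, X_j(Λ) = (j·i·b·Λ)^{−2b(b−2ijν)} · Γ(b(b + ij(Λ−2ν))) · Γ(b² + ijb(Λ−2ν) + 1) · Γ(2b² + ijb(Λ−2ν) + 1) · Γ(j·i·b(Λ−2ν)) / ∏_{ε=±1} [ Γ(bQ/2 − j·i·b(εθ₀ + θ_*/2 − Λ + ν)) · Γ(bQ/2 + i·j·b(θ_*/2 + εθ_t + Λ − ν)) ], where Γ is the complex Gamma function and the complex power uses the principal branch of the logarithm. Then for j = +1 and j = −1, X_j(Λ) → 1 as Λ → +∞. -/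
open Complex Filter

/-!
Euler's product `Γ(z + a) / (Γ(z) z ^ a) = ∏ₖ (1 + (z + k)⁻¹) ^ a / (1 + a (z + k)⁻¹)` has factors
`1 + O((z + k)⁻²)`. In a sector `|arg z| ≤ φ < π` one has `‖z + k‖ ≥ cos (φ / 2) (‖z‖ + k)`, so
dominated convergence for infinite products gives `Γ(z + a) ∼ Γ(z) z ^ a` as `z → ∞` in the sector.
Writing `z = j i b Λ`, the function `X_j` is a quotient of four values `Γ(z + αᵢ)` by four values
`Γ(z + βᵢ)` times the power `z ^ ∑ (βᵢ - αᵢ)`, so the factors `Γ(z)` and the powers of `z` cancel.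
-/

open Asymptotics Bornology Topology

/-- The factor `(1 + w) ^ a / (1 + a w)` of Euler's product for the ratio `Γ(z + a) / (Γ(z) z ^ a)`,
where it is evaluated at `w = (z + k)⁻¹`. -/
noncomputable def eulerFactor (a w : ℂ) : ℂ := (1 + w) ^ a / (1 + a * w)

/-- The quotient of `Γ(z + a)` by its leading asymptotic `Γ(z) z ^ a`, with the principal branch of
the power. -/
noncomputable def gammaRatio (a z : ℂ) : ℂ := Gamma (z + a) / (Gamma z * z ^ a)

/-- The filter of neighbourhoods of infinity within the closed sector `|arg z| ≤ φ`, along which the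
Gamma asymptotics hold when `φ < π`. -/
noncomputable def sectorAtInfty (φ : ℝ) : Filter ℂ := cobounded ℂ ⊓ 𝓟 {z | |z.arg| ≤ φ}

theorem one_add_cpow_sub_isBigO_sq (a : ℂ) :
    (fun w : ℂ => (1 + w) ^ a - (1 + a * w)) =O[𝓝 0] fun w => w ^ 2 := by
  have taylor := (one_add_cpow_hasFPowerSeriesAt_zero (a := a)).isBigO_sub_partialSum_pow 2
  simpa [← norm_pow, FormalMultilinearSeries.partialSum, Finset.sum_range_succ, binomialSeries,
    mul_comm a] using taylor

theorem eulerFactor_sub_one_isBigO_sq (a : ℂ) :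
    (fun w => eulerFactor a w - 1) =O[𝓝 0] fun w => w ^ 2 := by
  have hden : Tendsto (fun w : ℂ => 1 + a * w) (𝓝 0) (𝓝 1) :=
    Continuous.tendsto' (by fun_prop) _ _ (by simp)
  have hinv : (fun w : ℂ => (1 + a * w)⁻¹) =O[𝓝 0] fun _ => (1 : ℂ) :=
    (hden.inv₀ one_ne_zero).isBigO_one ℂ
  refine ((one_add_cpow_sub_isBigO_sq a).mul hinv).congr' ?_ (by simp)
  filter_upwards [hden.eventually_ne one_ne_zero] with w hw
  rw [eulerFactor, ← div_eq_mul_inv, sub_div, div_self hw]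

theorem tendsto_eulerFactor_nhds_zero (a : ℂ) : Tendsto (eulerFactor a) (𝓝 0) (𝓝 1) := by
  have hsq : Tendsto (fun w : ℂ => w ^ 2) (𝓝 0) (𝓝 0) :=
    Continuous.tendsto' (by fun_prop) _ _ (by simp)
  simpa using ((eulerFactor_sub_one_isBigO_sq a).trans_tendsto hsq).add_const 1

theorem add_natCast_mem_slitPlane {z : ℂ} (hz : z ∈ slitPlane) (n : ℕ) : z + n ∈ slitPlane := by
  simp only [mem_slitPlane_iff, add_re, natCast_re, add_im, natCast_im, add_zero] at hz ⊢
  exact hz.imp_left fun h => by positivity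

theorem arg_add_arg_one_add_inv_mem_Ioc {z : ℂ} (hz : z ∈ slitPlane) :
    z.arg + (1 + z⁻¹).arg ∈ Set.Ioc (-Real.pi) Real.pi := by
  have him : (1 + z⁻¹).im = -z.im / normSq z := by simp
  have hsq : 0 < normSq z := normSq_pos.2 (slitPlane_ne_zero hz)
  have hz' := arg_mem_Ioc z
  have hw' := arg_mem_Ioc (1 + z⁻¹)
  rcases lt_trichotomy z.im 0 with h | h | h
  · have hz_neg : z.arg < 0 := arg_neg_iff.2 h
    have hw_nonneg : 0 ≤ (1 + z⁻¹).arg :=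
      arg_nonneg_iff.2 (him ▸ div_nonneg (by linarith) hsq.le)
    constructor <;> linarith [hz'.1, hw'.2]
  · have hre : 0 < z.re := (mem_slitPlane_iff.1 hz).resolve_right (not_not.2 h)
    have hz_zero : z.arg = 0 := arg_eq_zero_iff.2 ⟨hre.le, h⟩
    rw [hz_zero, zero_add]
    exact hw'
  · have hz_nonneg : 0 ≤ z.arg := arg_nonneg_iff.2 h.le
    have hw_neg : (1 + z⁻¹).arg < 0 :=
      arg_neg_iff.2 (him ▸ div_neg_of_neg_of_pos (by linarith) hsq)
    constructor <;> linarith [hz'.2, hw'.1]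

theorem add_one_cpow (a : ℂ) {z : ℂ} (hz : z ∈ slitPlane) :
    (z + 1) ^ a = z ^ a * (1 + z⁻¹) ^ a := by
  have hz0 : z ≠ 0 := slitPlane_ne_zero hz
  have hmul : z + 1 = z * (1 + z⁻¹) := by rw [mul_add, mul_one, mul_inv_cancel₀ hz0]
  have hz1 : z + 1 ≠ 0 := slitPlane_ne_zero (mod_cast add_natCast_mem_slitPlane hz 1)
  have hw : 1 + z⁻¹ ≠ 0 := right_ne_zero_of_mul (hmul ▸ hz1)
  rw [cpow_def_of_ne_zero hz1, cpow_def_of_ne_zero hz0, cpow_def_of_ne_zero hw, hmul,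
    log_mul hz0 hw (arg_add_arg_one_add_inv_mem_Ioc hz), add_mul, exp_add]

theorem prod_one_add_inv_cpow (a : ℂ) {z : ℂ} (hz : z ∈ slitPlane) (n : ℕ) :
    z ^ a * ∏ k ∈ Finset.range n, (1 + (z + k)⁻¹) ^ a = (z + n) ^ a := by
  induction n with
  | zero => simp
  | succ n ih =>
    rw [Finset.prod_range_succ, ← mul_assoc, ih, ← add_one_cpow a (add_natCast_mem_slitPlane hz n),
      Nat.cast_succ, add_assoc]

theorem tendsto_add_natCast_cpow_div_natCast_cpow (z a : ℂ) :
    Tendsto (fun n : ℕ => (z + n) ^ a / (n : ℂ) ^ a) atTop (𝓝 1) := by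
  have hbase : Tendsto (fun n : ℕ => 1 + z / n) atTop (𝓝 1) := by
    simpa using (tendsto_const_div_atTop_nhds_zero_nat z).const_add 1
  have hpow : Tendsto (fun n : ℕ => (1 + z / n) ^ a) atTop (𝓝 1) := by
    simpa using hbase.cpow (tendsto_const_nhds (x := a)) one_mem_slitPlane
  refine hpow.congr' ?_
  filter_upwards [eventually_gt_atTop 0, hbase.eventually_ne one_ne_zero] with n hn hne
  have hn' : (n : ℂ) ≠ 0 := Nat.cast_ne_zero.2 hn.ne'
  have hlog : log (z + n) = log n + log (1 + z / n) := by
    rw [← natCast_log, ← log_ofReal_mul (mod_cast hn) hne, ofReal_natCast, mul_add, mul_one,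
      mul_div_cancel₀ _ hn', add_comm]
  have hz : z + n ≠ 0 := by
    rw [show z + n = n * (1 + z / n) by field_simp; ring]
    exact mul_ne_zero hn' hne
  rw [cpow_def_of_ne_zero hz, cpow_def_of_ne_zero hn', cpow_def_of_ne_zero hne, hlog, add_mul,
    exp_add, mul_div_cancel_left₀ _ (exp_ne_zero _)]

theorem prod_eulerFactor_eq_GammaSeq_div (a : ℂ) {z : ℂ} (hz : z ∈ slitPlane) {n : ℕ} (hn : n ≠ 0) :
    ∏ k ∈ Finset.range (n + 1), eulerFactor a (z + k)⁻¹ =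
      GammaSeq (z + a) n / (GammaSeq z n * z ^ a) * ((z + 1 + n) ^ a / (n : ℂ) ^ a) := by
  have hn' : (n : ℂ) ≠ 0 := Nat.cast_ne_zero.2 hn
  have hpow : ∏ k ∈ Finset.range (n + 1), (1 + (z + k)⁻¹) ^ a = (z + 1 + n) ^ a / z ^ a := by
    rw [eq_div_iff (cpow_ne_zero_iff.2 (Or.inl (slitPlane_ne_zero hz))), mul_comm,
      prod_one_add_inv_cpow a hz, Nat.cast_succ, add_comm (n : ℂ), ← add_assoc]
  have hlin (k : ℕ) : 1 + a * (z + k)⁻¹ = (z + a + k) / (z + k) := by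
    field_simp [slitPlane_ne_zero (add_natCast_mem_slitPlane hz k)]
    ring
  have hfact : (n.factorial : ℂ) ≠ 0 := Nat.cast_ne_zero.2 n.factorial_ne_zero
  simp only [eulerFactor, Finset.prod_div_distrib, hpow, hlin, GammaSeq, cpow_add _ _ hn']
  have hnz : (n : ℂ) ^ z ≠ 0 := cpow_ne_zero_iff.2 (Or.inl hn')
  have hna : (n : ℂ) ^ a ≠ 0 := cpow_ne_zero_iff.2 (Or.inl hn')
  field_simp

theorem Gamma_ne_zero_of_mem_slitPlane {z : ℂ} (hz : z ∈ slitPlane) : Gamma z ≠ 0 :=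
  Gamma_ne_zero fun m hm => slitPlane_ne_zero (add_natCast_mem_slitPlane hz m) (by simp [hm])

-- At a pole of `Γ(z + a)` both sides are `0`, since `1 / 0 = 0` and `Gamma (-m) = 0`.
theorem tendsto_prod_eulerFactor (a : ℂ) {z : ℂ} (hz : z ∈ slitPlane) :
    Tendsto (fun n => ∏ k ∈ Finset.range n, eulerFactor a (z + k)⁻¹) atTop
      (𝓝 (gammaRatio a z)) := by
  have hden : Gamma z * z ^ a ≠ 0 := mul_ne_zero (Gamma_ne_zero_of_mem_slitPlane hz)
    (cpow_ne_zero_iff.2 (Or.inl (slitPlane_ne_zero hz)))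
  have hlim := ((GammaSeq_tendsto_Gamma (z + a)).div
    ((GammaSeq_tendsto_Gamma z).mul_const (z ^ a)) hden).mul
      (tendsto_add_natCast_cpow_div_natCast_cpow (z + 1) a)
  rw [mul_one] at hlim
  refine (tendsto_add_atTop_iff_nat 1).1 (hlim.congr' ?_)
  filter_upwards [eventually_ne_atTop 0] with n hn
  exact (prod_eulerFactor_eq_GammaSeq_div a hz hn).symm

theorem cos_half_arg_mul_le_norm_add_ofReal (z : ℂ) (t : ℝ) :
    Real.cos (z.arg / 2) * (‖z‖ + t) ≤ ‖z + t‖ := by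
  have hcos : Real.cos z.arg = 2 * Real.cos (z.arg / 2) ^ 2 - 1 := by
    rw [← Real.cos_two_mul]; ring_nf
  have hnorm : ‖z + t‖ ^ 2 = ‖z‖ ^ 2 + 2 * t * ‖z‖ * Real.cos z.arg + t ^ 2 := by
    rw [mul_assoc _ ‖z‖, norm_mul_cos_arg, ← normSq_eq_norm_sq, ← normSq_eq_norm_sq]
    simp only [normSq_apply, add_re, add_im, ofReal_re, ofReal_im]
    ring
  have hgap : ‖z + t‖ ^ 2 - (Real.cos (z.arg / 2) * (‖z‖ + t)) ^ 2 =
      (1 - Real.cos (z.arg / 2) ^ 2) * (‖z‖ - t) ^ 2 := by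
    rw [hnorm, hcos]
    ring
  have hgap_nonneg : 0 ≤ (1 - Real.cos (z.arg / 2) ^ 2) * (‖z‖ - t) ^ 2 :=
    mul_nonneg (sub_nonneg.2 (Real.cos_sq_le_one _)) (sq_nonneg _)
  exact le_of_sq_le_sq (by linarith) (norm_nonneg _)

theorem cos_half_mul_le_norm_add_ofReal {z : ℂ} {φ t : ℝ} (hz : |z.arg| ≤ φ)
    (hφ : φ ≤ 2 * Real.pi) (ht : 0 ≤ t) : Real.cos (φ / 2) * (‖z‖ + t) ≤ ‖z + t‖ := by
  have hcos : Real.cos (φ / 2) ≤ Real.cos (z.arg / 2) := by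
    rw [← Real.cos_abs (z.arg / 2), abs_div, abs_two]
    exact Real.cos_le_cos_of_nonneg_of_le_pi (by positivity) (by linarith) (by gcongr)
  exact (mul_le_mul_of_nonneg_right hcos (by positivity)).trans
    (cos_half_arg_mul_le_norm_add_ofReal z t)

theorem eventually_mem_slitPlane_sectorAtInfty {φ : ℝ} (hφ : φ < Real.pi) :
    ∀ᶠ z in sectorAtInfty φ, z ∈ slitPlane := by
  filter_upwards [mem_inf_of_left (eventually_ne_cobounded 0),
    mem_inf_of_right (mem_principal_self _)] with z hz0 hz
  exact mem_slitPlane_iff_arg.2 ⟨((le_abs_self _).trans_lt (hz.trans_lt hφ)).ne, hz0⟩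

theorem exists_eventually_norm_eulerFactor_sub_one_le (a : ℂ) {φ : ℝ} (hφ : φ < Real.pi) :
    ∃ C : ℝ, ∀ᶠ z in sectorAtInfty φ, ∀ k : ℕ,
      ‖eulerFactor a (z + k)⁻¹ - 1‖ ≤ C * (((k : ℝ) + 1) ^ 2)⁻¹ := by
  obtain ⟨C, hC, hbound⟩ := (eulerFactor_sub_one_isBigO_sq a).exists_pos
  obtain ⟨δ, hδ, hball⟩ := Metric.eventually_nhds_iff.1 hbound.bound
  set κ := Real.cos (φ / 2)
  have hfar : ∀ᶠ z in sectorAtInfty φ, max 1 (κ * δ)⁻¹ < ‖z‖ :=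
    (tendsto_norm_cobounded_atTop.eventually_gt_atTop _).filter_mono inf_le_left
  refine ⟨C * (κ ^ 2)⁻¹, ?_⟩
  filter_upwards [hfar, mem_inf_of_right (mem_principal_self _)] with z hfar hz k
  obtain ⟨hz1, hzδ⟩ := max_lt_iff.1 hfar
  have hφ0 : 0 ≤ φ := (abs_nonneg _).trans hz
  have hκ : 0 < κ := Real.cos_pos_of_mem_Ioo ⟨by linarith [Real.pi_pos], by linarith⟩
  have hk : κ * (‖z‖ + k) ≤ ‖z + k‖ := by
    exact_mod_cast cos_half_mul_le_norm_add_ofReal hz (by linarith) k.cast_nonneg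
  have hsmall : ‖(z + k)⁻¹‖ < δ := by
    rw [norm_inv]
    refine inv_lt_of_inv_lt₀ hδ (lt_of_lt_of_le ?_ hk)
    rw [mul_inv, inv_mul_lt_iff₀ hκ] at hzδ
    nlinarith [k.cast_nonneg (α := ℝ)]
  calc ‖eulerFactor a (z + k)⁻¹ - 1‖ ≤ C * ‖(z + k)⁻¹ ^ 2‖ := hball (by simpa using hsmall)
    _ = C * (‖z + k‖ ^ 2)⁻¹ := by rw [norm_pow, norm_inv, inv_pow]
    _ ≤ C * ((κ * (k + 1)) ^ 2)⁻¹ := by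
      gcongr
      nlinarith
    _ = C * (κ ^ 2)⁻¹ * ((k + 1 : ℝ) ^ 2)⁻¹ := by rw [mul_pow, mul_inv, mul_assoc]

theorem tendsto_gammaRatio_sectorAtInfty (a : ℂ) {φ : ℝ} (hφ : φ < Real.pi) :
    Tendsto (gammaRatio a) (sectorAtInfty φ) (𝓝 1) := by
  obtain ⟨C, hC⟩ := exists_eventually_norm_eulerFactor_sub_one_le a hφ
  have hsum : Summable fun k : ℕ => C * (((k : ℝ) + 1) ^ 2)⁻¹ := by
    have hshift := (summable_nat_add_iff 1).2 (Real.summable_nat_pow_inv.2 one_lt_two)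
    exact_mod_cast hshift.mul_left C
  have hfactor (k : ℕ) :
      Tendsto (fun z => eulerFactor a (z + k)⁻¹ - 1) (sectorAtInfty φ) (𝓝 0) := by
    have hinv : Tendsto (fun z : ℂ => (z + k)⁻¹) (sectorAtInfty φ) (𝓝 0) :=
      (tendsto_inv₀_cobounded.comp (tendsto_add_const_cobounded (k : ℂ))).mono_left inf_le_left
    simpa using ((tendsto_eulerFactor_nhds_zero a).comp hinv).sub_const 1
  have hprod := tendsto_tprod_one_add_of_dominated_convergence hsum hfactor hC
  simp only [add_zero, tprod_one] at hprod
  refine hprod.congr' ?_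
  filter_upwards [hC, eventually_mem_slitPlane_sectorAtInfty hφ] with z hz hslit
  have hmul := (multipliable_one_add_of_summable
    (hsum.of_nonneg_of_le (fun _ => norm_nonneg _) hz)).tendsto_prod_tprod_nat
  simp only [add_sub_cancel] at hmul ⊢
  exact tendsto_nhds_unique hmul (tendsto_prod_eulerFactor a hslit)

theorem tendsto_mul_ofReal_sectorAtInfty {c : ℂ} (hc : c ≠ 0) :
    Tendsto (fun t : ℝ => c * t) atTop (sectorAtInfty |c.arg|) := by
  refine tendsto_inf.2 ⟨?_, tendsto_principal.2 ?_⟩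
  · refine tendsto_norm_atTop_iff_cobounded.1 ?_
    simpa using tendsto_abs_atTop_atTop.const_mul_atTop (norm_pos_iff.2 hc)
  · filter_upwards [eventually_gt_atTop 0] with t ht
    exact (congrArg abs (arg_mul_real ht c)).le

theorem tendsto_cpow_mul_Gamma_add_div_Gamma_add (α β : ℂ) {φ : ℝ} (hφ : φ < Real.pi) :
    Tendsto (fun z => z ^ (β - α) * (Gamma (z + α) / Gamma (z + β))) (sectorAtInfty φ) (𝓝 1) := by
  have hquot := (tendsto_gammaRatio_sectorAtInfty α hφ).div
    (tendsto_gammaRatio_sectorAtInfty β hφ) one_ne_zero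
  rw [div_one] at hquot
  refine hquot.congr' ?_
  filter_upwards [eventually_mem_slitPlane_sectorAtInfty hφ] with z hz
  have hz0 := slitPlane_ne_zero hz
  have hΓ := Gamma_ne_zero_of_mem_slitPlane hz
  have hzα : z ^ α ≠ 0 := cpow_ne_zero_iff.2 (Or.inl hz0)
  have hzβ : z ^ β ≠ 0 := cpow_ne_zero_iff.2 (Or.inl hz0)
  simp only [Pi.div_apply, gammaRatio, cpow_sub _ _ hz0]
  field_simp

theorem cpow_sum {ι : Type*} (s : Finset ι) (f : ι → ℂ) {z : ℂ} (hz : z ≠ 0) :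
    z ^ (∑ i ∈ s, f i) = ∏ i ∈ s, z ^ f i := by
  simp only [cpow_def_of_ne_zero hz, Finset.mul_sum, exp_sum]

theorem tendsto_cpow_sum_mul_prod_Gamma_div_prod_Gamma {ι : Type*} (s : Finset ι) (α β : ι → ℂ)
    {φ : ℝ} (hφ : φ < Real.pi) :
    Tendsto (fun z => z ^ (∑ i ∈ s, (β i - α i)) *
      ((∏ i ∈ s, Gamma (z + α i)) / ∏ i ∈ s, Gamma (z + β i))) (sectorAtInfty φ) (𝓝 1) := by
  have hprod := tendsto_finsetProd s fun i _ =>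
    tendsto_cpow_mul_Gamma_add_div_Gamma_add (α i) (β i) hφ
  rw [Finset.prod_const_one] at hprod
  refine hprod.congr' ?_
  filter_upwards [eventually_mem_slitPlane_sectorAtInfty hφ] with z hz
  rw [Finset.prod_mul_distrib, Finset.prod_div_distrib, cpow_sum s _ (slitPlane_ne_zero hz)]

theorem stmt9_general (b θ0 θt θs ν j : ℂ) (hjb : j * I * b ∈ slitPlane) :
    Tendsto (fun Λ : ℝ =>
      (j * I * b * Λ) ^ (-2 * b * (b - 2 * I * j * ν)) *
        Gamma (b * (b + I * j * (Λ - 2 * ν))) *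
        Gamma (b ^ 2 + I * j * (Λ - 2 * ν) * b + 1) *
        Gamma (2 * b ^ 2 + I * j * (Λ - 2 * ν) * b + 1) *
        Gamma (j * I * b * (Λ - 2 * ν)) /
        ((Gamma (b * (b + b⁻¹) / 2 - j * I * b * (θ0 + θs / 2 - Λ + ν)) *
            Gamma (b * (b + b⁻¹) / 2 - j * I * b * (-θ0 + θs / 2 - Λ + ν))) *
          (Gamma (b * (b + b⁻¹) / 2 + I * j * b * (θs / 2 + θt + Λ - ν)) *
            Gamma (b * (b + b⁻¹) / 2 + I * j * b * (θs / 2 - θt + Λ - ν)))))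
      atTop (𝓝 1) := by
  have hφ : |(j * I * b).arg| < Real.pi :=
    abs_lt.2 ⟨neg_pi_lt_arg _, (arg_le_pi _).lt_of_ne (slitPlane_arg_ne_pi hjb)⟩
  have hb : b ≠ 0 := right_ne_zero_of_mul (slitPlane_ne_zero hjb)
  let α : Fin 4 → ℂ := ![b ^ 2 - 2 * I * j * b * ν, b ^ 2 + 1 - 2 * I * j * b * ν,
    2 * b ^ 2 + 1 - 2 * I * j * b * ν, -2 * I * j * b * ν]
  let β : Fin 4 → ℂ := ![b * (b + b⁻¹) / 2 - j * I * b * (θ0 + θs / 2 + ν),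
    b * (b + b⁻¹) / 2 - j * I * b * (-θ0 + θs / 2 + ν),
    b * (b + b⁻¹) / 2 + I * j * b * (θs / 2 + θt - ν),
    b * (b + b⁻¹) / 2 + I * j * b * (θs / 2 - θt - ν)]
  have hexp : ∑ i, (β i - α i) = -2 * b * (b - 2 * I * j * ν) := by
    simp only [Fin.sum_univ_four, α, β, Matrix.cons_val]
    field_simp
    ring
  have hlim := (tendsto_cpow_sum_mul_prod_Gamma_div_prod_Gamma Finset.univ α β hφ).comp
    (tendsto_mul_ofReal_sectorAtInfty (slitPlane_ne_zero hjb))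
  refine hlim.congr fun Λ => ?_
  calc _ = (j * I * b * Λ) ^ (-2 * b * (b - 2 * I * j * ν)) *
        Gamma (j * I * b * Λ + α 0) * Gamma (j * I * b * Λ + α 1) *
        Gamma (j * I * b * Λ + α 2) * Gamma (j * I * b * Λ + α 3) /
        ((Gamma (j * I * b * Λ + β 0) * Gamma (j * I * b * Λ + β 1)) *
          (Gamma (j * I * b * Λ + β 2) * Gamma (j * I * b * Λ + β 3))) := by
        simp only [Function.comp_apply, hexp, Fin.prod_univ_four]
        ring
    _ = _ := by
      congrm _ * Gamma ?_ * Gamma ?_ * Gamma ?_ * Gamma ?_ /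
        ((Gamma ?_ * Gamma ?_) * (Gamma ?_ * Gamma ?_)) <;>
        simp only [α, β, Matrix.cons_val] <;> ring

/-- The limit (3.19) in the proof of Lemma 3.1 of the paper: `X_j(Λ) → 1` as `Λ → +∞`,
for `j = ±1`, where `X_j` is the coefficient function defined in (3.17). -/
theorem stmt9 (b θ0 θt θs ν : ℝ) (hb : 0 < b) (j : ℝ) (hj : j = 1 ∨ j = -1) :
    Tendsto (fun Λ : ℝ =>
      ((j : ℂ) * I * b * Λ) ^ (-2 * (b : ℂ) * (b - 2 * I * j * ν)) *
        Complex.Gamma (b * (b + I * j * (Λ - 2 * ν))) *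
        Complex.Gamma (b ^ 2 + I * j * (Λ - 2 * ν) * b + 1) *
        Complex.Gamma (2 * b ^ 2 + I * j * (Λ - 2 * ν) * b + 1) *
        Complex.Gamma (j * I * b * (Λ - 2 * ν)) /
        ((Complex.Gamma (b * (b + b⁻¹) / 2 - j * I * b * (θ0 + θs / 2 - Λ + ν)) *
            Complex.Gamma (b * (b + b⁻¹) / 2 - j * I * b * (-θ0 + θs / 2 - Λ + ν))) *
          (Complex.Gamma (b * (b + b⁻¹) / 2 + I * j * b * (θs / 2 + θt + Λ - ν)) *
            Complex.Gamma (b * (b + b⁻¹) / 2 + I * j * b * (θs / 2 - θt + Λ - ν)))))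
      atTop (nhds 1) := by
  have hjb : (j * I * b : ℂ) ∈ slitPlane := by
    rcases hj with rfl | rfl <;> simp [mem_slitPlane_iff, hb.ne']
  exact_mod_cast stmt9_general b θ0 θt θs ν j hjb
end

section
/- Let b > 0 and θ₀, θ_t, θ_*, ν ∈ ℝ. For real Λ > 0 define F(Λ) = −2 cosh(2πb(θ₀ + θ_t + ib/2)) + 4 ∑_{κ=±1} [ ∏_{ε=±1} cosh(πb(ε(Λ−θ_*)/2 − ib/2 − θ₀ − κ(Λ/2 − ν))) · cosh(πb(ε(Λ+θ_*)/2 − ib/2 − θ_t − κ(Λ/2 − ν))) ] / [ sinh(2πb(κ(Λ/2 − ν) + ib/2)) · sinh(2πbκ(Λ/2 − ν)) ]. Then, as Λ → +∞, F(Λ) converges to 4 e^{πb(θ₀+θ_t+2ν)} cosh(πb(ib/2 + θ₀ + θ_*/2 − ν)) cosh(πb(ib/2 − θ_*/2 + θ_t − ν)) + 4 e^{−πb(θ₀+θ_t−2ν)} cosh(πb(ib/2 + θ_t + θ_*/2 + ν)) cosh(πb(ib/2 − θ_*/2 + θ₀ + ν)) − 2 cosh(2πb(ib/2 + θ₀ +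 θ_t)). -/
open Complex Filter

/-! Write `c = i b / 2`. The summand `κ = 1` of `H_F⁰` is unchanged when `σ_s`, `c`, `θ₁` and `θ_t`
all change sign, so the summand `κ = -1` is the summand `κ = 1` with `c`, `θ₁` and `θ_t` negated,
and a single limit is needed. In it two of the four hyperbolic cosines do not depend on `Λ`; the
other two are compared with the two hyperbolic sines of the denominator through
`cosh (z + u) / sinh (z + v) → exp (u - v)` as `re z → ∞`. -/

theorem cosh_add_eq_exp_mul (z u : ℂ) :
    cosh (z + u) = exp z / 2 * (exp u + exp (-u) * exp (-2 * z)) := by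
  have hexp : exp (-(z + u)) = exp z * (exp (-u) * exp (-2 * z)) := by
    rw [← exp_add, ← exp_add]
    ring_nf
  rw [cosh, hexp, exp_add]
  ring

theorem sinh_add_eq_exp_mul (z v : ℂ) :
    sinh (z + v) = exp z / 2 * (exp v - exp (-v) * exp (-2 * z)) := by
  have hexp : exp (-(z + v)) = exp z * (exp (-v) * exp (-2 * z)) := by
    rw [← exp_add, ← exp_add]
    ring_nf
  rw [sinh, hexp, exp_add]
  ring

theorem tendsto_cosh_add_div_sinh_add_comap_re_atTop (u v : ℂ) :
    Tendsto (fun z : ℂ => cosh (z + u) / sinh (z + v)) (comap re atTop) (nhds (exp (u - v))) := by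
  have hdecay : Tendsto (fun z : ℂ => exp (-2 * z)) (comap re atTop) (nhds 0) := by
    refine tendsto_exp_comap_re_atBot.comp (tendsto_comap_iff.mpr ?_)
    simpa [Function.comp_def] using tendsto_comap.const_mul_atTop (zero_lt_two' ℝ)
  have hratio : Tendsto
      (fun z : ℂ => (exp u + exp (-u) * exp (-2 * z)) / (exp v - exp (-v) * exp (-2 * z)))
      (comap re atTop) (nhds ((exp u + exp (-u) * 0) / (exp v - exp (-v) * 0))) :=
    ((hdecay.const_mul _).const_add _).div ((hdecay.const_mul _).const_sub _)
      (by simp [exp_ne_zero])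
  rw [mul_zero, mul_zero, add_zero, sub_zero, ← exp_sub] at hratio
  refine hratio.congr fun z => ?_
  rw [cosh_add_eq_exp_mul, sinh_add_eq_exp_mul,
    mul_div_mul_left _ _ (div_ne_zero (exp_ne_zero z) two_ne_zero)]

/-- The summand `κ = 1` of the potential `H_F⁰` of the Virasoro fusion-kernel difference operator;
the summand `κ = -1` is obtained by `σ ↦ -σ`. The shift `c` equals `i b / 2` in the paper and is
kept as a variable because the symmetry `fusionSummand_neg` changes its sign. -/
noncomputable def fusionSummand (b c θ₁ θt θinf θ₀ σ : ℂ) : ℂ :=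
  cosh (Real.pi * b * (θinf - c - θ₁ - σ)) * cosh (Real.pi * b * (-θinf - c - θ₁ - σ)) *
      (cosh (Real.pi * b * (θ₀ - c - θt - σ)) * cosh (Real.pi * b * (-θ₀ - c - θt - σ))) /
    (sinh (2 * Real.pi * b * (σ + c)) * sinh (2 * Real.pi * b * σ))

/-- The potential `H_F⁰` of the Virasoro fusion-kernel difference operator, with `θinf = θ_∞` and
`σ = σ_s`. Where a hyperbolic sine in a denominator vanishes, that summand has the value `0`. -/
noncomputable def fusionPotential (b θ₁ θt θinf θ₀ σ : ℂ) : ℂ :=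
  -2 * cosh (2 * Real.pi * b * (θ₁ + θt + I * b / 2)) +
    4 * (fusionSummand b (I * b / 2) θ₁ θt θinf θ₀ σ +
      fusionSummand b (I * b / 2) θ₁ θt θinf θ₀ (-σ))

/-- The potential `H⁰` of the confluent fusion-kernel difference operator for even index, with
`θs = θ_*`. -/
noncomputable def confluentPotential (b θ₀ θt θs ν : ℂ) : ℂ :=
  4 * exp (Real.pi * b * (θ₀ + θt + 2 * ν)) *
      cosh (Real.pi * b * (I * b / 2 + θ₀ + θs / 2 - ν)) *
      cosh (Real.pi * b * (I * b / 2 - θs / 2 + θt - ν)) +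
    4 * exp (-(Real.pi * b * (θ₀ + θt - 2 * ν))) *
      cosh (Real.pi * b * (I * b / 2 + θt + θs / 2 + ν)) *
      cosh (Real.pi * b * (I * b / 2 - θs / 2 + θ₀ + ν)) -
    2 * cosh (2 * Real.pi * b * (I * b / 2 + θ₀ + θt))

theorem cosh_mul_eq_of_eq_neg {k x y : ℂ} (h : x = -y) : cosh (k * x) = cosh (k * y) := by
  rw [h, mul_neg, cosh_neg]

theorem fusionSummand_neg (b c θ₁ θt θinf θ₀ σ : ℂ) :
    fusionSummand b c θ₁ θt θinf θ₀ (-σ) = fusionSummand b (-c) (-θ₁) (-θt) θinf θ₀ σ := by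
  have hcosh (x θ : ℂ) : cosh (Real.pi * b * (x - c - θ - -σ)) =
      cosh (Real.pi * b * (-x - -c - -θ - σ)) := cosh_mul_eq_of_eq_neg (by ring)
  have hsinh : sinh (2 * Real.pi * b * (-σ + c)) = -sinh (2 * Real.pi * b * (σ + -c)) := by
    rw [← sinh_neg]
    ring_nf
  simp only [fusionSummand, hcosh, hsinh, neg_neg, mul_neg, sinh_neg, neg_mul]
  ring

theorem fusionSummand_confluent_eq (b c θ₀ θt θs ν Λ : ℂ) :
    fusionSummand b c θ₀ θt ((Λ - θs) / 2) ((Λ + θs) / 2) (Λ / 2 - ν) =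
      cosh (Real.pi * b * Λ + Real.pi * b * (c + θ₀ - θs / 2 - ν)) /
          sinh (Real.pi * b * Λ + Real.pi * b * (2 * c - 2 * ν)) *
        (cosh (Real.pi * b * Λ + Real.pi * b * (c + θt + θs / 2 - ν)) /
          sinh (Real.pi * b * Λ + Real.pi * b * (-2 * ν))) *
        (cosh (Real.pi * b * (c + θ₀ + θs / 2 - ν)) *
          cosh (Real.pi * b * (c - θs / 2 + θt - ν))) := by
  have hinf : cosh (Real.pi * b * ((Λ - θs) / 2 - c - θ₀ - (Λ / 2 - ν))) =
      cosh (Real.pi * b * (c + θ₀ + θs / 2 - ν)) := cosh_mul_eq_of_eq_neg (by ring)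
  have hinf_neg : cosh (Real.pi * b * (-((Λ - θs) / 2) - c - θ₀ - (Λ / 2 - ν))) =
      cosh (Real.pi * b * (Λ + (c + θ₀ - θs / 2 - ν))) := cosh_mul_eq_of_eq_neg (by ring)
  have hzero : cosh (Real.pi * b * ((Λ + θs) / 2 - c - θt - (Λ / 2 - ν))) =
      cosh (Real.pi * b * (c - θs / 2 + θt - ν)) := cosh_mul_eq_of_eq_neg (by ring)
  have hzero_neg : cosh (Real.pi * b * (-((Λ + θs) / 2) - c - θt - (Λ / 2 - ν))) =
      cosh (Real.pi * b * (Λ + (c + θt + θs / 2 - ν))) := cosh_mul_eq_of_eq_neg (by ring)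
  have hsinh_shift : 2 * Real.pi * b * (Λ / 2 - ν + c) =
      Real.pi * b * (Λ + (2 * c - 2 * ν)) := by ring
  have hsinh : 2 * Real.pi * b * (Λ / 2 - ν) = Real.pi * b * (Λ + -2 * ν) := by ring
  simp only [← mul_add]
  rw [fusionSummand, hinf, hinf_neg, hzero, hzero_neg, hsinh_shift, hsinh]
  ring

theorem confluentPotential_eq (b θ₀ θt θs ν : ℂ) :
    confluentPotential b θ₀ θt θs ν =
      -2 * cosh (2 * Real.pi * b * (θ₀ + θt + I * b / 2)) +
        4 * (exp (Real.pi * b * (θ₀ + θt + 2 * ν)) *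
            (cosh (Real.pi * b * (I * b / 2 + θ₀ + θs / 2 - ν)) *
              cosh (Real.pi * b * (I * b / 2 - θs / 2 + θt - ν))) +
          exp (Real.pi * b * (-θ₀ + -θt + 2 * ν)) *
            (cosh (Real.pi * b * (-(I * b / 2) + -θ₀ + θs / 2 - ν)) *
              cosh (Real.pi * b * (-(I * b / 2) - θs / 2 + -θt - ν)))) := by
  have hθ₀ : cosh (Real.pi * b * (-(I * b / 2) + -θ₀ + θs / 2 - ν)) =
      cosh (Real.pi * b * (I * b / 2 - θs / 2 + θ₀ + ν)) := cosh_mul_eq_of_eq_neg (by ring)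
  have hθt : cosh (Real.pi * b * (-(I * b / 2) - θs / 2 + -θt - ν)) =
      cosh (Real.pi * b * (I * b / 2 + θt + θs / 2 + ν)) := cosh_mul_eq_of_eq_neg (by ring)
  have hexp : Real.pi * b * (-θ₀ + -θt + 2 * ν) = -(Real.pi * b * (θ₀ + θt - 2 * ν)) := by ring
  have hconst : θ₀ + θt + I * b / 2 = I * b / 2 + θ₀ + θt := by ring
  rw [confluentPotential, hθ₀, hθt, hexp, hconst]
  ring

section Confluence

variable {α : Type*} {l : Filter α} {b : ℂ} {Λ : α → ℂ}

theorem tendsto_fusionSummand_confluent (hΛ : Tendsto (fun x => (b * Λ x).re) l atTop)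
    (c θ₀ θt θs ν : ℂ) :
    Tendsto
      (fun x => fusionSummand b c θ₀ θt ((Λ x - θs) / 2) ((Λ x + θs) / 2) (Λ x / 2 - ν)) l
      (nhds (exp (Real.pi * b * (θ₀ + θt + 2 * ν)) *
        (cosh (Real.pi * b * (c + θ₀ + θs / 2 - ν)) *
          cosh (Real.pi * b * (c - θs / 2 + θt - ν))))) := by
  have hre : Tendsto (fun x => Real.pi * b * Λ x) l (comap re atTop) := by
    refine tendsto_comap_iff.mpr ?_
    simpa only [Function.comp_def, mul_assoc, re_ofReal_mul] using
      hΛ.const_mul_atTop Real.pi_pos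
  have hratio (u v : ℂ) : Tendsto
      (fun x => cosh (Real.pi * b * Λ x + u) / sinh (Real.pi * b * Λ x + v)) l
      (nhds (exp (u - v))) :=
    (tendsto_cosh_add_div_sinh_add_comap_re_atTop u v).comp hre
  have hexp : exp (Real.pi * b * (θ₀ + θt + 2 * ν)) =
      exp (Real.pi * b * (c + θ₀ - θs / 2 - ν) - Real.pi * b * (2 * c - 2 * ν)) *
        exp (Real.pi * b * (c + θt + θs / 2 - ν) - Real.pi * b * (-2 * ν)) := by
    rw [← exp_add]
    ring_nf
  simp only [fusionSummand_confluent_eq, hexp]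
  exact ((hratio _ _).mul (hratio _ _)).mul_const _

theorem stmt11_general (hΛ : Tendsto (fun x => (b * Λ x).re) l atTop) (θ₀ θt θs ν : ℂ) :
    Tendsto
      (fun x => fusionPotential b θ₀ θt ((Λ x - θs) / 2) ((Λ x + θs) / 2) (Λ x / 2 - ν)) l
      (nhds (confluentPotential b θ₀ θt θs ν)) := by
  simp only [fusionPotential, fusionSummand_neg, confluentPotential_eq]
  exact (((tendsto_fusionSummand_confluent hΛ _ θ₀ θt θs ν).add
    (tendsto_fusionSummand_confluent hΛ _ (-θ₀) (-θt) θs ν)).const_mul 4).const_add _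

end Confluence

/-- Equation (3.29) in the proof of Lemma 3.1 of the paper: the potential `H_F⁰` of the
Virasoro fusion-kernel difference operator, evaluated at the confluent parameter
substitution, converges as `Λ → +∞` to the potential `H⁰` of the confluent
fusion-kernel difference operator (even index). -/
theorem stmt11 (b θ0 θt θs ν : ℝ) (hb : 0 < b) :
    Tendsto (fun Λ : ℝ =>
      -2 * Complex.cosh (2 * Real.pi * b * (θ0 + θt + I * b / 2)) +
        4 * ((Complex.cosh (Real.pi * b * ((Λ - θs) / 2 - I * b / 2 - θ0 - (Λ / 2 - ν))) *
                Complex.cosh (Real.pi * b * (-((Λ - θs) / 2) - I * b / 2 - θ0 - (Λ / 2 - ν))) *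
                (Complex.cosh (Real.pi * b * ((Λ + θs) / 2 - I * b / 2 - θt - (Λ / 2 - ν))) *
                  Complex.cosh
                    (Real.pi * b * (-((Λ + θs) / 2) - I * b / 2 - θt - (Λ / 2 - ν))))) /
              (Complex.sinh (2 * Real.pi * b * ((Λ / 2 - ν) + I * b / 2)) *
                Complex.sinh (2 * Real.pi * b * (Λ / 2 - ν))) +
            (Complex.cosh (Real.pi * b * ((Λ - θs) / 2 - I * b / 2 - θ0 + (Λ / 2 - ν))) *
                Complex.cosh (Real.pi * b * (-((Λ - θs) / 2) - I * b / 2 - θ0 + (Λ / 2 - ν))) *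
                (Complex.cosh (Real.pi * b * ((Λ + θs) / 2 - I * b / 2 - θt + (Λ / 2 - ν))) *
                  Complex.cosh
                    (Real.pi * b * (-((Λ + θs) / 2) - I * b / 2 - θt + (Λ / 2 - ν))))) /
              (Complex.sinh (2 * Real.pi * b * (-(Λ / 2 - ν) + I * b / 2)) *
                Complex.sinh (2 * Real.pi * b * (-(Λ / 2 - ν)))))) atTop
      (nhds
        (4 * Complex.exp (Real.pi * b * (θ0 + θt + 2 * ν)) *
            Complex.cosh (Real.pi * b * (I * b / 2 + θ0 + θs / 2 - ν)) *
            Complex.cosh (Real.pi * b * (I * b / 2 - θs / 2 + θt - ν)) +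
          4 * Complex.exp (-(Real.pi * b * (θ0 + θt - 2 * ν))) *
            Complex.cosh (Real.pi * b * (I * b / 2 + θt + θs / 2 + ν)) *
            Complex.cosh (Real.pi * b * (I * b / 2 - θs / 2 + θ0 + ν)) -
          2 * Complex.cosh (2 * Real.pi * b * (I * b / 2 + θ0 + θt)))) := by
  have hre : Tendsto (fun Λ : ℝ => ((b : ℂ) * Λ).re) atTop atTop := by
    simpa using tendsto_id.const_mul_atTop hb
  simpa only [fusionPotential, fusionSummand, confluentPotential, sub_neg_eq_add] using
    stmt11_general hre θ0 θt θs ν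
end

section
/- Let b > 0, let θ₀, θ_t, θ_* ∈ ℝ, and let σ ∈ ℝ with σ ≠ 0. Set α = −e^{−2πb(θ₀ − θ_t + ib/2)}, β = −e^{2πb(θ₀ + θ_t − ib/2)}, γ = −e^{−2πb(θ_* + ib/2)}, q = e^{−2iπb²}, and z = e^{2πbσ}. Then 2 e^{−πb(σ − ib/2)} cosh(πb(ib/2 + θ_* − σ)) · ∏_{ε=±1} cosh(πb(−ib/2 + θ_t + σ + εθ₀)) / [ sinh(πb(2σ − ib)) · sinh(2πbσ) ] = e^{2πb(ib/2 + θ_*/2 − θ_t)} · (1 − αz)(1 − βz)(1 − γz) / [ (1 − z²)(1 − qz²) ]. -/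
open Complex

/-
`1 + e^{2x} = 2 e^x cosh x` and `e^{2x} - 1 = 2 e^x sinh x` turn every hyperbolic function into an
exponential times a factor `1 ± e^{2x}`. For the arguments at hand the exponentials `e^{2x}` are
exactly `-αz`, `-βz`, `-γz`, `z²` and `qz²` (the argument containing `θ_*` being negated first), and
the leftover exponents add up to that of the prefactor.
-/

theorem one_add_exp_two_mul (x : ℂ) : 1 + exp (2 * x) = 2 * exp x * cosh x := by
  rw [mul_right_comm, two_cosh, add_mul, ← exp_add, ← exp_add, neg_add_cancel, exp_zero, two_mul,
    add_comm]

theorem exp_two_mul_sub_one (x : ℂ) : exp (2 * x) - 1 = 2 * exp x * sinh x := by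
  rw [mul_right_comm, two_sinh, sub_mul, ← exp_add, ← exp_add, neg_add_cancel, exp_zero, two_mul]

theorem sinh_ne_zero_of_re_ne_zero {x : ℂ} (hx : x.re ≠ 0) : sinh x ≠ 0 := by
  intro h
  have hexp : exp (2 * x) = 1 := by
    rw [← sub_eq_zero, exp_two_mul_sub_one, h, mul_zero]
  have hnorm : Real.exp (2 * x).re = 1 := by
    rw [← norm_exp, hexp, norm_one]
  exact hx (by simpa using hnorm)

theorem one_sub_exp_mul_one_sub_exp (x y : ℂ) :
    (1 - exp (2 * x)) * (1 - exp (2 * y)) = 4 * exp (x + y) * (sinh x * sinh y) := by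
  rw [← neg_sub, exp_two_mul_sub_one, ← neg_sub (exp (2 * y)), exp_two_mul_sub_one, exp_add]
  ring

theorem exp_mul_cosh_prod_div_sinh_mul_sinh (w x y t : ℂ) {u v : ℂ}
    (hu : sinh u ≠ 0) (hv : sinh v ≠ 0) :
    2 * exp w * cosh x * (cosh y * cosh t) / (sinh u * sinh v) =
      exp (w - x - y - t + (v + u)) *
        ((1 + exp (2 * t)) * (1 + exp (2 * y)) * (1 + exp (2 * x))) /
          ((1 - exp (2 * v)) * (1 - exp (2 * u))) := by
  have hweight : exp (w - x - y - t + (v + u)) * (exp x * exp y * exp t) =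
      exp w * exp (v + u) := by
    simp only [← exp_add]
    congr 1
    ring
  have hden : 4 * exp (v + u) * (sinh v * sinh u) ≠ 0 := by
    simp [hu, hv]
  rw [one_sub_exp_mul_one_sub_exp, div_eq_div_iff (mul_ne_zero hu hv) hden]
  simp only [one_add_exp_two_mul]
  linear_combination -8 * (cosh x * cosh y * cosh t) * (sinh u * sinh v) * hweight

theorem stmt14_general (b θ0 θt θs σ α β γ q z : ℂ)
    (hα : α = -exp (-(2 * Real.pi * b * (θ0 - θt + I * b / 2))))
    (hβ : β = -exp (2 * Real.pi * b * (θ0 + θt - I * b / 2)))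
    (hγ : γ = -exp (-(2 * Real.pi * b * (θs + I * b / 2))))
    (hq : q = exp (-(2 * I * Real.pi * b ^ 2)))
    (hz : z = exp (2 * Real.pi * b * σ))
    (hsinh_sub : sinh (Real.pi * b * (2 * σ - I * b)) ≠ 0)
    (hsinh : sinh (2 * Real.pi * b * σ) ≠ 0) :
    2 * exp (-(Real.pi * b * (σ - I * b / 2))) *
        cosh (Real.pi * b * (I * b / 2 + θs - σ)) *
        (cosh (Real.pi * b * (-(I * b) / 2 + θt + σ + θ0)) *
          cosh (Real.pi * b * (-(I * b) / 2 + θt + σ - θ0))) /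
        (sinh (Real.pi * b * (2 * σ - I * b)) * sinh (2 * Real.pi * b * σ))
      = exp (2 * Real.pi * b * (I * b / 2 + θs / 2 - θt)) *
          ((1 - α * z) * (1 - β * z) * (1 - γ * z)) / ((1 - z ^ 2) * (1 - q * z ^ 2)) := by
  set A : ℂ := Real.pi * b * (I * b / 2 + θs - σ)
  set B : ℂ := Real.pi * b * (-(I * b) / 2 + θt + σ + θ0)
  set C : ℂ := Real.pi * b * (-(I * b) / 2 + θt + σ - θ0)
  set D : ℂ := Real.pi * b * (2 * σ - I * b)
  set E : ℂ := 2 * Real.pi * b * σ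
  have hαz : α * z = -exp (2 * C) := by
    rw [hα, hz, neg_mul, ← exp_add]
    congr 2
    ring
  have hβz : β * z = -exp (2 * B) := by
    rw [hβ, hz, neg_mul, ← exp_add]
    congr 2
    ring
  have hγz : γ * z = -exp (2 * -A) := by
    rw [hγ, hz, neg_mul, ← exp_add]
    congr 2
    ring
  have hz_sq : z ^ 2 = exp (2 * E) := by
    rw [hz, ← exp_nat_mul, Nat.cast_ofNat]
  have hqz_sq : q * z ^ 2 = exp (2 * D) := by
    rw [hz_sq, hq, ← exp_add]
    congr 1
    ring
  have hexponent : -(Real.pi * b * (σ - I * b / 2)) - -A - B - C + (E + D) =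
      2 * Real.pi * b * (I * b / 2 + θs / 2 - θt) := by
    ring
  rw [← cosh_neg A, exp_mul_cosh_prod_div_sinh_mul_sinh _ _ _ _ hsinh_sub hsinh, hexponent,
    hαz, hβz, hγz, hqz_sq, hz_sq]
  simp only [sub_neg_eq_add]

/-- Equation (5.48) of the paper: the coefficient `V_k(σ,−θ_t)` (even `k`) of the dual
confluent difference operator equals `e^{2πb(ib/2+θ_*/2−θ_t)}` times the coefficient
function `h(α,β,γ;q,z)` of the continuous dual `q`-Hahn difference operator. -/
theorem stmt14 (b θ0 θt θs σ : ℝ) (hb : 0 < b) (hσ : σ ≠ 0) (α β γ q z : ℂ)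
    (hα : α = -Complex.exp (-(2 * Real.pi * b * (θ0 - θt + I * b / 2))))
    (hβ : β = -Complex.exp (2 * Real.pi * b * (θ0 + θt - I * b / 2)))
    (hγ : γ = -Complex.exp (-(2 * Real.pi * b * (θs + I * b / 2))))
    (hq : q = Complex.exp (-(2 * I * Real.pi * b ^ 2)))
    (hz : z = Complex.exp (2 * Real.pi * b * σ)) :
    2 * Complex.exp (-(Real.pi * b * (σ - I * b / 2))) *
        Complex.cosh (Real.pi * b * (I * b / 2 + θs - σ)) *
        (Complex.cosh (Real.pi * b * (-(I * b) / 2 + θt + σ + θ0)) *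
          Complex.cosh (Real.pi * b * (-(I * b) / 2 + θt + σ - θ0))) /
        (Complex.sinh (Real.pi * b * (2 * σ - I * b)) * Complex.sinh (2 * Real.pi * b * σ))
      = Complex.exp (2 * Real.pi * b * (I * b / 2 + θs / 2 - θt)) *
          ((1 - α * z) * (1 - β * z) * (1 - γ * z)) / ((1 - z ^ 2) * (1 - q * z ^ 2)) := by
  refine stmt14_general b θ0 θt θs σ α β γ q z hα hβ hγ hq hz (sinh_ne_zero_of_re_ne_zero ?_)
    (sinh_ne_zero_of_re_ne_zero ?_) <;> simp [Real.pi_ne_zero, hb.ne', hσ]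
end

section
/- Let b > 0 and θ₀, θ_t, θ_*, ν ∈ ℝ. Set α = e^{4πbθ₀}, β = e^{−4πbθ_t}, γ = e^{2πb(θ₀ + θ_* − θ_t)}, q = e^{−2iπb²}, and x = −e^{πb(−ib + 2θ₀ + θ_*)} e^{−2πbν}. Then the following two identities hold: (i) −4 e^{πb(θ₀ − θ_t + 2ν)} cosh(πb(ib/2 − θ₀ − θ_*/2 + ν)) cosh(πb(ib/2 + θ_t + θ_*/2 + ν)) = −e^{−2πb(θ₀ − θ_t − ib/2)} x^{−2} · αq(x − 1)(βx − γ); (ii) −4 e^{−πb(θ₀ − θ_t − 2ν)} cosh(πb(ib/2 − θ₀ + θ_*/2 − ν)) cosh(πb(ib/2 + θ_t − θ_*/2 − ν)) = −e^{−2πb(θ₀ − θ_t − ib/2)} x^{−2} · (x − αq)(x − γq). -/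
open Complex

/-!
Every factor of `d⁺` and `d⁻` at `x = -e^X`, with exponential parameters, is up to sign a sum of
two exponentials, and `e^u + e^v = 2 e^((u+v)/2) cosh ((u-v)/2)`. Each coefficient is thus an
exponential times a product of two hyperbolic cosines, and the identities reduce to comparing
exponents.
-/

section BigQJacobi

variable {R : Type*} [CommRing R]

/-- The coefficient `d⁺(α, β, γ, q, x)` of `P(qx)` in the difference equation of the big
`q`-Jacobi polynomials `P`. -/
def bigQJacobiPlus (α β γ q x : R) : R := α * q * (x - 1) * (β * x - γ)

/-- The coefficient `d⁻(α, β, γ, q, x)` of `P(q⁻¹x)` in the difference equation of the big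
`q`-Jacobi polynomials `P`. It does not depend on `β`, so `β` is not an argument. -/
def bigQJacobiMinus (α γ q x : R) : R := (x - α * q) * (x - γ * q)

end BigQJacobi

lemma exp_add_exp_eq_two_mul_exp_mul_cosh (u v : ℂ) :
    exp u + exp v = 2 * exp ((u + v) / 2) * cosh ((u - v) / 2) := by
  have hu : u = (u + v) / 2 + (u - v) / 2 := by ring
  have hv : v = (u + v) / 2 + -((u - v) / 2) := by ring
  calc exp u + exp v
      = exp ((u + v) / 2) * (exp ((u - v) / 2) + exp (-((u - v) / 2))) := by
        rw [mul_add, ← exp_add, ← exp_add, ← hu, ← hv]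
    _ = 2 * exp ((u + v) / 2) * cosh ((u - v) / 2) := by
        rw [← two_cosh]; ring

lemma neg_exp_zpow_of_even {n : ℤ} (hn : Even n) (z : ℂ) : (-exp z) ^ n = exp (n * z) := by
  rw [hn.neg_zpow, exp_int_mul]

lemma bigQJacobiPlus_exp (A B G Q X : ℂ) :
    bigQJacobiPlus (exp A) (exp B) (exp G) (exp Q) (-exp X) =
      4 * exp (A + Q + (B + G) / 2 + X) * cosh (X / 2) * cosh ((B + X - G) / 2) := by
  have h_sub_one : -exp X - 1 = -(2 * exp (X / 2) * cosh (X / 2)) := by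
    have h := exp_add_exp_eq_two_mul_exp_mul_cosh X 0
    rw [exp_zero, add_zero, sub_zero] at h
    rw [← h]; ring
  have h_sub_gamma : exp B * -exp X - exp G =
      -(2 * exp ((B + X + G) / 2) * cosh ((B + X - G) / 2)) := by
    rw [← exp_add_exp_eq_two_mul_exp_mul_cosh, exp_add]; ring
  have h_exp : exp (A + Q + (B + G) / 2 + X) =
      exp A * exp Q * exp (X / 2) * exp ((B + X + G) / 2) := by
    simp only [← exp_add]; ring_nf
  rw [bigQJacobiPlus, h_sub_one, h_sub_gamma, h_exp]
  ring

lemma bigQJacobiMinus_exp (A G Q X : ℂ) :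
    bigQJacobiMinus (exp A) (exp G) (exp Q) (-exp X) =
      4 * exp (Q + (A + G) / 2 + X) * cosh ((X - A - Q) / 2) * cosh ((X - G - Q) / 2) := by
  have h_factor (C : ℂ) : -exp X - exp C * exp Q =
      -(2 * exp ((X + C + Q) / 2) * cosh ((X - C - Q) / 2)) := by
    rw [add_assoc, sub_sub, ← exp_add_exp_eq_two_mul_exp_mul_cosh, exp_add]; ring
  have h_exp : exp (Q + (A + G) / 2 + X) = exp ((X + A + Q) / 2) * exp ((X + G + Q) / 2) := by
    rw [← exp_add]; ring_nf
  rw [bigQJacobiMinus, h_factor, h_factor, h_exp]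
  ring

theorem stmt15_general (b θ0 θt θs ν : ℂ) (α β γ q x : ℂ)
    (hα : α = exp (4 * Real.pi * b * θ0))
    (hβ : β = exp (-(4 * Real.pi * b * θt)))
    (hγ : γ = exp (2 * Real.pi * b * (θ0 + θs - θt)))
    (hq : q = exp (-(2 * I * Real.pi * b ^ 2)))
    (hx : x = -exp (Real.pi * b * (-(I * b) + 2 * θ0 + θs)) *
        exp (-(2 * Real.pi * b * ν))) :
    (-4 * exp (Real.pi * b * (θ0 - θt + 2 * ν)) *
        cosh (Real.pi * b * (I * b / 2 - θ0 - θs / 2 + ν)) *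
        cosh (Real.pi * b * (I * b / 2 + θt + θs / 2 + ν))
      = -exp (-(2 * Real.pi * b * (θ0 - θt - I * b / 2))) * x ^ (-2 : ℤ) *
          bigQJacobiPlus α β γ q x)
    ∧ (-4 * exp (-(Real.pi * b * (θ0 - θt - 2 * ν))) *
        cosh (Real.pi * b * (I * b / 2 - θ0 + θs / 2 - ν)) *
        cosh (Real.pi * b * (I * b / 2 + θt - θs / 2 - ν))
      = -exp (-(2 * Real.pi * b * (θ0 - θt - I * b / 2))) * x ^ (-2 : ℤ) *
          bigQJacobiMinus α γ q x) := by
  have hxX : x = -exp (Real.pi * b * (-(I * b) + 2 * θ0 + θs - 2 * ν)) := by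
    rw [hx, neg_mul, ← exp_add]; ring_nf
  have h_combine (P Y E c d : ℂ) :
      -exp P * exp Y * (4 * exp E * c * d) = -4 * exp (P + Y + E) * c * d := by
    rw [exp_add, exp_add]; ring
  rw [hxX, hα, hβ, hγ, hq, neg_exp_zpow_of_even even_neg_two, bigQJacobiPlus_exp,
    bigQJacobiMinus_exp, h_combine, h_combine]
  push_cast
  constructor
  · rw [← cosh_neg (_ * (I * b / 2 - _ - _ + _)), ← cosh_neg (_ * (I * b / 2 + _ + _ + _))]
    congrm -4 * exp ?_ * cosh ?_ * cosh ?_ <;> ring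
  · congrm -4 * exp ?_ * cosh ?_ * cosh ?_ <;> ring

/-- The identities (7.37) (even-`k` case) of the paper: the shift coefficients `H±` of the
confluent fusion-kernel difference operator equal, up to the prefactor
`−e^{−2πb(θ₀−θ_t−ib/2)} x^{−2}`, the coefficients `d⁺ = αq(x−1)(βx−γ)` and
`d⁻ = (x−αq)(x−γq)` of the big `q`-Jacobi difference operator. -/
theorem stmt15 (b θ0 θt θs ν : ℝ) (hb : 0 < b) (α β γ q x : ℂ)
    (hα : α = Complex.exp (4 * Real.pi * b * θ0))
    (hβ : β = Complex.exp (-(4 * Real.pi * b * θt)))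
    (hγ : γ = Complex.exp (2 * Real.pi * b * (θ0 + θs - θt)))
    (hq : q = Complex.exp (-(2 * I * Real.pi * b ^ 2)))
    (hx : x = -Complex.exp (Real.pi * b * (-(I * b) + 2 * θ0 + θs)) *
        Complex.exp (-(2 * Real.pi * b * ν))) :
    (-4 * Complex.exp (Real.pi * b * (θ0 - θt + 2 * ν)) *
        Complex.cosh (Real.pi * b * (I * b / 2 - θ0 - θs / 2 + ν)) *
        Complex.cosh (Real.pi * b * (I * b / 2 + θt + θs / 2 + ν))
      = -Complex.exp (-(2 * Real.pi * b * (θ0 - θt - I * b / 2))) * x ^ (-2 : ℤ) *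
          (α * q * (x - 1) * (β * x - γ)))
    ∧ (-4 * Complex.exp (-(Real.pi * b * (θ0 - θt - 2 * ν))) *
        Complex.cosh (Real.pi * b * (I * b / 2 - θ0 + θs / 2 - ν)) *
        Complex.cosh (Real.pi * b * (I * b / 2 + θt - θs / 2 - ν))
      = -Complex.exp (-(2 * Real.pi * b * (θ0 - θt - I * b / 2))) * x ^ (-2 : ℤ) *
          ((x - α * q) * (x - γ * q))) :=
  stmt15_general b θ0 θt θs ν α β γ q x hα hβ hγ hq hx
end

section
/- Let b > 0, let θ₀, θ_t, θ_* ∈ ℝ, let n ≥ 0 be an integer, and set Q = b + b^{−1}, α = −e^{−2πb(θ₀ − θ_t + ib/2)}, β = −e^{2πb(θ₀ + θ_t − ib/2)}, γ = −e^{−2πb(θ_* + ib/2)}, q = e^{−2iπb²}, and ν_n = θ_t − iQ/2 − θ_*/2 − inb. Then the following two identities hold: (i) −4 e^{−πb(θ₀ − θ_t − 2ν_n)} cosh(πb(ib/2 + θ₀ − θ_*/2 + ν_n)) cosh(πb(ib/2 − θ_t + θ_*/2 + ν_n)) = α(1 − q^{n})(1 − βγ q^{n−1}); (ii) −4 e^{πb(θ₀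 − θ_t + 2ν_n)} cosh(πb(ib/2 + θ₀ + θ_*/2 − ν_n)) cosh(πb(ib/2 − θ_t − θ_*/2 − ν_n)) = α^{−1}(1 − αβ q^{n})(1 − αγ q^{n}). -/
open Complex

/-!
The `i b⁻¹ / 2` in `iQ/2` shifts `π b ν_n` by a quarter turn `iπ/2`. It turns each hyperbolic
cosine into `∓ i` times a hyperbolic sine, and each `sinh z` is, up to an exponential, a factor
`1 - e^{±2z}`; the exponents `±2z` are those of the products of `α`, `β`, `γ` and `q^n` on the
right-hand sides.
-/

theorem cosh_add_pi_div_two_mul_I (z : ℂ) : cosh (z + Real.pi / 2 * I) = I * sinh z := by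
  rw [cosh_add, cosh_mul_I, sinh_mul_I, cos_pi_div_two, sin_pi_div_two]
  ring

theorem two_mul_sinh_eq_exp_mul_one_sub_exp (z : ℂ) :
    2 * sinh z = exp z * (1 - exp (-(2 * z))) := by
  rw [two_sinh, mul_sub, mul_one, ← exp_add]
  ring_nf

theorem four_mul_exp_mul_sinh_mul_sinh (a x y : ℂ) :
    4 * exp a * sinh x * sinh y =
      exp (a + x + y) * (1 - exp (-(2 * x))) * (1 - exp (-(2 * y))) := by
  calc 4 * exp a * sinh x * sinh y = exp a * (2 * sinh x) * (2 * sinh y) := by ring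
    _ = _ := by
      rw [two_mul_sinh_eq_exp_mul_one_sub_exp, two_mul_sinh_eq_exp_mul_one_sub_exp, exp_add,
        exp_add]
      ring

theorem neg_four_mul_exp_mul_cosh_add_mul_cosh_add (a x y : ℂ) :
    -4 * exp a * cosh (x + Real.pi / 2 * I) * cosh (y + Real.pi / 2 * I) =
      exp (a + x + y) * (1 - exp (-(2 * x))) * (1 - exp (-(2 * y))) := by
  rw [cosh_add_pi_div_two_mul_I, cosh_add_pi_div_two_mul_I, ← four_mul_exp_mul_sinh_mul_sinh]
  linear_combination (-4 * exp a * sinh x * sinh y) * I_mul_I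

theorem neg_four_mul_exp_mul_cosh_sub_mul_cosh_sub (a x y : ℂ) :
    -4 * exp a * cosh (x - Real.pi / 2 * I) * cosh (y - Real.pi / 2 * I) =
      exp (a - x - y) * (1 - exp (2 * x)) * (1 - exp (2 * y)) := by
  have cosh_reflect (z : ℂ) : cosh (z - Real.pi / 2 * I) = cosh (-z + Real.pi / 2 * I) := by
    rw [← cosh_neg, neg_sub, sub_eq_neg_add]
  rw [cosh_reflect, cosh_reflect, neg_four_mul_exp_mul_cosh_add_mul_cosh_add]
  simp only [mul_neg, neg_neg, sub_eq_add_neg]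

theorem neg_exp_mul_neg_exp_mul_exp_zpow (x y z : ℂ) (n : ℤ) :
    -exp x * -exp y * exp z ^ n = exp (x + y + n * z) := by
  rw [neg_mul_neg, ← exp_int_mul, exp_add, exp_add]

/-- The point `ν_n = θ_t - iQ/2 - θ_*/2 - inb`, `Q = b + b⁻¹`, at which the difference equation of
the confluent fusion kernel is discretized, for complex `n`. -/
noncomputable def kernelNode (b θt θs n : ℂ) : ℂ :=
  θt - I * (b + b⁻¹) / 2 - θs / 2 - I * n * b

/-- The coefficient `H⁻` (even index) of the renormalized confluent fusion-kernel difference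
operator. -/
noncomputable def kernelShiftMinus (b θ0 θt θs ν : ℂ) : ℂ :=
  -4 * exp (-(Real.pi * b * (θ0 - θt - 2 * ν))) *
    cosh (Real.pi * b * (I * b / 2 + θ0 - θs / 2 + ν)) *
    cosh (Real.pi * b * (I * b / 2 - θt + θs / 2 + ν))

/-- The coefficient `H⁺` (even index) of the renormalized confluent fusion-kernel difference
operator. -/
noncomputable def kernelShiftPlus (b θ0 θt θs ν : ℂ) : ℂ :=
  -4 * exp (Real.pi * b * (θ0 - θt + 2 * ν)) *
    cosh (Real.pi * b * (I * b / 2 + θ0 + θs / 2 - ν)) *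
    cosh (Real.pi * b * (I * b / 2 - θt - θs / 2 - ν))

theorem pi_mul_mul_kernelNode {b : ℂ} (hb : b ≠ 0) (θt θs n : ℂ) :
    Real.pi * b * kernelNode b θt θs n =
      Real.pi * b * (θt - θs / 2 - I * b / 2 - I * n * b) - Real.pi / 2 * I := by
  unfold kernelNode
  field_simp
  ring

theorem kernelShiftMinus_kernelNode {b : ℂ} (hb : b ≠ 0) (θ0 θt θs n : ℂ) :
    kernelShiftMinus b θ0 θt θs (kernelNode b θt θs n) =
      -exp (-(2 * Real.pi * b * (θ0 - θt + I * b / 2))) *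
        (1 - exp (-(2 * I * Real.pi * n * b ^ 2))) *
        (1 - exp (2 * Real.pi * b * (θ0 + θt - θs - I * n * b))) := by
  have hν := pi_mul_mul_kernelNode hb θt θs n
  have h_exp : -(Real.pi * b * (θ0 - θt - 2 * kernelNode b θt θs n)) =
      Real.pi * b * (3 * θt - θ0 - θs - I * b - 2 * I * n * b) - Real.pi * I := by
    linear_combination 2 * hν
  have h_cosh₀ : Real.pi * b * (I * b / 2 + θ0 - θs / 2 + kernelNode b θt θs n) =
      Real.pi * b * (θ0 + θt - θs - I * n * b) - Real.pi / 2 * I := by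
    linear_combination hν
  have h_cosht : Real.pi * b * (I * b / 2 - θt + θs / 2 + kernelNode b θt θs n) =
      -(I * Real.pi * n * b ^ 2) - Real.pi / 2 * I := by
    linear_combination hν
  rw [kernelShiftMinus, h_exp, h_cosh₀, h_cosht, exp_sub_pi_mul_I, mul_neg, neg_mul, neg_mul,
    neg_four_mul_exp_mul_cosh_sub_mul_cosh_sub]
  ring_nf

theorem kernelShiftPlus_kernelNode {b : ℂ} (hb : b ≠ 0) (θ0 θt θs n : ℂ) :
    kernelShiftPlus b θ0 θt θs (kernelNode b θt θs n) =
      -exp (2 * Real.pi * b * (θ0 - θt + I * b / 2)) *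
        (1 - exp (2 * Real.pi * b * (2 * θt - I * b - I * n * b))) *
        (1 - exp (-(2 * Real.pi * b * (θ0 - θt + θs + I * b + I * n * b)))) := by
  have hν := pi_mul_mul_kernelNode hb θt θs n
  have h_exp : Real.pi * b * (θ0 - θt + 2 * kernelNode b θt θs n) =
      Real.pi * b * (θ0 + θt - θs - I * b - 2 * I * n * b) - Real.pi * I := by
    linear_combination 2 * hν
  have h_cosh₀ : Real.pi * b * (I * b / 2 + θ0 + θs / 2 - kernelNode b θt θs n) =
      Real.pi * b * (θ0 - θt + θs + I * b + I * n * b) + Real.pi / 2 * I := by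
    linear_combination -hν
  have h_cosht : Real.pi * b * (I * b / 2 - θt - θs / 2 - kernelNode b θt θs n) =
      Real.pi * b * (I * b + I * n * b - 2 * θt) + Real.pi / 2 * I := by
    linear_combination -hν
  rw [kernelShiftPlus, h_exp, h_cosh₀, h_cosht, exp_sub_pi_mul_I, mul_neg, neg_mul, neg_mul,
    neg_four_mul_exp_mul_cosh_add_mul_cosh_add]
  ring_nf

theorem stmt17_general {b : ℂ} (hb : b ≠ 0) (θ0 θt θs : ℂ) (n : ℤ) {α β γ q : ℂ}
    (hα : α = -exp (-(2 * Real.pi * b * (θ0 - θt + I * b / 2))))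
    (hβ : β = -exp (2 * Real.pi * b * (θ0 + θt - I * b / 2)))
    (hγ : γ = -exp (-(2 * Real.pi * b * (θs + I * b / 2))))
    (hq : q = exp (-(2 * I * Real.pi * b ^ 2))) :
    kernelShiftMinus b θ0 θt θs (kernelNode b θt θs n) =
        α * (1 - q ^ n) * (1 - β * γ * q ^ (n - 1)) ∧
      kernelShiftPlus b θ0 θt θs (kernelNode b θt θs n) =
        α⁻¹ * (1 - α * β * q ^ n) * (1 - α * γ * q ^ n) := by
  have hqn : q ^ n = exp (-(2 * I * Real.pi * n * b ^ 2)) := by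
    rw [hq, ← exp_int_mul]
    ring_nf
  have hα_inv : α⁻¹ = -exp (2 * Real.pi * b * (θ0 - θt + I * b / 2)) := by
    rw [hα, inv_neg, ← exp_neg, neg_neg]
  have hβγ : β * γ * q ^ (n - 1) = exp (2 * Real.pi * b * (θ0 + θt - θs - I * n * b)) := by
    rw [hβ, hγ, hq, neg_exp_mul_neg_exp_mul_exp_zpow]
    push_cast
    ring_nf
  have hαβ : α * β * q ^ n = exp (2 * Real.pi * b * (2 * θt - I * b - I * n * b)) := by
    rw [hα, hβ, hq, neg_exp_mul_neg_exp_mul_exp_zpow]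
    ring_nf
  have hαγ : α * γ * q ^ n =
      exp (-(2 * Real.pi * b * (θ0 - θt + θs + I * b + I * n * b))) := by
    rw [hα, hγ, hq, neg_exp_mul_neg_exp_mul_exp_zpow]
    ring_nf
  constructor
  · rw [kernelShiftMinus_kernelNode hb, hqn, hβγ, hα]
  · rw [kernelShiftPlus_kernelNode hb, hαβ, hαγ, hα_inv]

/-- The identities (5.42)–(5.43) of the paper (even-index case): the shift coefficients
`H±` of the renormalized confluent fusion-kernel difference operator, evaluated at the
discretized value `ν = ν_n = θ_t − iQ/2 − θ_*/2 − inb`, equal the recurrence coefficients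
`b⁻_n = α(1−q^n)(1−βγq^{n−1})` and `b⁺_n = α^{−1}(1−αβq^n)(1−αγq^n)` of the continuous
dual `q`-Hahn polynomials. -/
theorem stmt17 (b θ0 θt θs : ℝ) (hb : 0 < b) (n : ℕ) (α β γ q νn : ℂ)
    (hα : α = -Complex.exp (-(2 * Real.pi * b * (θ0 - θt + I * b / 2))))
    (hβ : β = -Complex.exp (2 * Real.pi * b * (θ0 + θt - I * b / 2)))
    (hγ : γ = -Complex.exp (-(2 * Real.pi * b * (θs + I * b / 2))))
    (hq : q = Complex.exp (-(2 * I * Real.pi * b ^ 2)))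
    (hν : νn = θt - I * (b + b⁻¹) / 2 - θs / 2 - I * n * b) :
    (-4 * Complex.exp (-(Real.pi * b * (θ0 - θt - 2 * νn))) *
        Complex.cosh (Real.pi * b * (I * b / 2 + θ0 - θs / 2 + νn)) *
        Complex.cosh (Real.pi * b * (I * b / 2 - θt + θs / 2 + νn))
      = α * (1 - q ^ n) * (1 - β * γ * q ^ ((n : ℤ) - 1)))
    ∧ (-4 * Complex.exp (Real.pi * b * (θ0 - θt + 2 * νn)) *
        Complex.cosh (Real.pi * b * (I * b / 2 + θ0 + θs / 2 - νn)) *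
        Complex.cosh (Real.pi * b * (I * b / 2 - θt - θs / 2 - νn))
      = α⁻¹ * (1 - α * β * q ^ n) * (1 - α * γ * q ^ n)) := by
  simpa only [kernelShiftMinus, kernelShiftPlus, kernelNode, hν, Int.cast_natCast, zpow_natCast,
    ofReal_add, ofReal_inv] using
    stmt17_general (ofReal_ne_zero.mpr hb.ne') θ0 θt θs n hα hβ hγ hq
end
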